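/- arXiv:1803.02575 — 13 statements merged into one kernel-verified Lean document; each statement's English description precedes it below -/
import Mathlib

section
/- Let n ≥ 3 and let x_1 < x_2 < ... < x_n be real numbers. Let p, q : ℝ → ℝ and let K be the n×n real matrix with entries K_{ij} = p(x_i)q(x_j) if x_i ≤ x_j and K_{ij} = p(x_j)q(x_i) if x_i > x_j. If K is nonsingular, then K⁻¹ is a symmetric tridiagonal matrix; that is, K⁻¹ is symmetric and (K⁻¹)_{ij} = 0 whenever |i − j| ≥ 2. -/
/-!
Write `a i = p (x (i+1))` and `b i = q (x (i+1))`, so that `K i j = a (min i j) * b (max i j)`.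
On either side of the diagonal the rows of `K` are multiples of one fixed row, the multipliers
being the entries of `a` (right of the diagonal) or of `b` (left of it). Choosing weights on the
three consecutive rows `h, i, k` orthogonal to both `a` and `b` (a cross product) therefore gives a
combination `c ᵥ* K` supported on the single column `i`; for the first row, weights on the rows
`0, 1` orthogonal to `a` suffice. The surviving entry is a product of factors which cannot vanish
when `K` is invertible (`consecutive_ne_zero`), so row `i` of `K⁻¹` is a multiple of `c`, which is
zero at every index beyond `i + 1`. Symmetry handles the other triangle.
-/

/-- If a row combination `c ᵥ* K` is a nonzero multiple of the `i`-th basis vector, then row `i`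
of `K⁻¹` is a multiple of `c`, and so vanishes where `c` does. -/
theorem inv_apply_eq_zero {n : ℕ} {K : Matrix (Fin n) (Fin n) ℝ} (hdet : IsUnit K.det)
    {c : Fin n → ℝ} {i j : Fin n} {d : ℝ} (hd : d ≠ 0)
    (hc : Matrix.vecMul c K = Pi.single i d) (hj : c j = 0) : K⁻¹ i j = 0 := by
  have h : c = Matrix.vecMul (Pi.single i d) K⁻¹ := by
    rw [← hc, Matrix.vecMul_vecMul, Matrix.mul_nonsing_inv K hdet, Matrix.vecMul_one]
  have h2 := congrFun h j
  rw [hj, Matrix.single_vecMul] at h2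
  simpa [hd] using h2.symm

theorem eq_zero_of_vecMul_eq_zero {n : ℕ} {K : Matrix (Fin n) (Fin n) ℝ} (hdet : IsUnit K.det)
    {c : Fin n → ℝ} (hc : Matrix.vecMul c K = 0) : c = 0 := by
  rw [← Matrix.vecMul_one c, ← Matrix.mul_nonsing_inv K hdet, ← Matrix.vecMul_vecMul, hc,
    Matrix.zero_vecMul]

/-- Otherwise rows `i` and `i + 1` of `K` would be linearly dependent. -/
theorem consecutive_ne_zero {n : ℕ} {K : Matrix (Fin n) (Fin n) ℝ} (hdet : IsUnit K.det)
    {a b : Fin n → ℝ} (hK : ∀ i j, K i j = if i ≤ j then a i * b j else a j * b i)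
    {i k : Fin n} (hik : k.1 = i.1 + 1) : a i * b k - a k * b i ≠ 0 := by
  intro hW
  have hne : i ≠ k := by intro h; rw [h] at hik; omega
  have key : ∀ s t : ℝ, s * a i + t * a k = 0 → s * b i + t * b k = 0 → s = 0 ∧ t = 0 := by
    intro s t ha hb
    have h0 : (Pi.single i s + Pi.single k t : Fin n → ℝ) = 0 := by
      apply eq_zero_of_vecMul_eq_zero hdet
      funext l
      simp only [Matrix.add_vecMul, Matrix.single_vecMul, Pi.add_apply, Pi.smul_apply,
        Matrix.row_apply, smul_eq_mul, Pi.zero_apply, hK]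
      rcases lt_trichotomy l i with h | h | h
      · rw [if_neg (by omega), if_neg (by omega)]
        linear_combination a l * hb
      · subst h
        rw [if_pos le_rfl, if_neg (by omega)]
        linear_combination a l * hb
      · rw [if_pos (by omega), if_pos (by omega)]
        linear_combination b l * ha
    constructor
    · simpa [hne] using congrFun h0 i
    · simpa [hne.symm] using congrFun h0 k
  obtain ⟨hak, hai⟩ := key (a k) (-a i) (by ring) (by linear_combination -hW)
  obtain ⟨hbk, hbi⟩ := key (b k) (-b i) (by linear_combination hW) (by ring)
  -- All four values vanish, so rows `i` and `k` are zero and any weights annihilate them.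
  have h1 := (key 1 0 (by linarith) (by linarith)).1
  exact one_ne_zero h1

theorem inv_upper_eq_zero {n : ℕ} {K : Matrix (Fin n) (Fin n) ℝ} (hdet : IsUnit K.det)
    {a b : Fin n → ℝ} (hK : ∀ i j, K i j = if i ≤ j then a i * b j else a j * b i)
    {i j : Fin n} (hij : i.1 + 2 ≤ j.1) : K⁻¹ i j = 0 := by
  obtain ⟨k, hk⟩ : ∃ k : Fin n, k.1 = i.1 + 1 := ⟨⟨i.1 + 1, by omega⟩, rfl⟩
  have hW := consecutive_ne_zero hdet hK hk
  have hjk : j ≠ k := by omega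
  have hji : j ≠ i := by omega
  by_cases hi : i.1 = 0
  · -- The first column of `K` is `a i` times a vector.
    have ha : a i ≠ 0 := by
      intro ha
      apply hdet.ne_zero
      apply Matrix.det_eq_zero_of_column_eq_zero i
      intro l
      rw [hK]
      split_ifs with h
      · obtain rfl : l = i := by omega
        simp [ha]
      · simp [ha]
    refine inv_apply_eq_zero hdet (c := Pi.single i (a k) + Pi.single k (-a i))
      (mul_ne_zero (neg_ne_zero.2 ha) hW) ?_ (by simp [hjk, hji])
    funext l
    simp only [Matrix.add_vecMul, Matrix.single_vecMul, Pi.add_apply, Pi.smul_apply,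
      Matrix.row_apply, smul_eq_mul, hK]
    by_cases h : l = i
    · subst h
      rw [if_pos le_rfl, if_neg (by omega), Pi.single_eq_same]
      ring
    · rw [if_pos (by omega), if_pos (by omega), Pi.single_eq_of_ne h]
      ring
  · obtain ⟨h, hh⟩ : ∃ h : Fin n, i.1 = h.1 + 1 :=
      ⟨⟨i.1 - 1, by omega⟩, by simp only; omega⟩
    have hV := consecutive_ne_zero hdet hK hh
    have hjh : j ≠ h := by omega
    -- The weights are the cross product of `(a h, a i, a k)` and `(b h, b i, b k)`.
    refine inv_apply_eq_zero hdet (c := Pi.single h (a i * b k - a k * b i) +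
      Pi.single i (a k * b h - a h * b k) + Pi.single k (a h * b i - a i * b h))
      (mul_ne_zero hV hW) ?_ (by simp [hjk, hji, hjh])
    funext l
    simp only [Matrix.add_vecMul, Matrix.single_vecMul, Pi.add_apply, Pi.smul_apply,
      Matrix.row_apply, smul_eq_mul, hK]
    rcases lt_trichotomy l i with h1 | h1 | h1
    · rw [if_neg (by omega : ¬ i ≤ l), if_neg (by omega : ¬ k ≤ l), Pi.single_eq_of_ne h1.ne]
      split_ifs with h2
      · obtain rfl : l = h := by omega
        ring
      · ring
    · subst h1
      rw [if_pos (by omega), if_pos le_rfl, if_neg (by omega), Pi.single_eq_same]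
      ring
    · rw [if_pos (by omega), if_pos (by omega), if_pos (by omega), Pi.single_eq_of_ne h1.ne']
      ring

/-- Let `n ≥ 3` and `x 1 < x 2 < ⋯ < x n` be real numbers.  Let `K` be the
`n × n` matrix with `K i j = p (x i) * q (x j)` if `x i ≤ x j` and `p (x j) * q (x i)` otherwise
(indices shifted so that matrix index `i : Fin n` corresponds to the point `x (i+1)`).
If `K` is nonsingular, then `K⁻¹` is symmetric and tridiagonal. -/
theorem stmt0 (n : ℕ) (hn : 3 ≤ n) (x : ℕ → ℝ)
    (hx : ∀ i j : ℕ, 1 ≤ i → i < j → j ≤ n → x i < x j)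
    (p q : ℝ → ℝ) (K : Matrix (Fin n) (Fin n) ℝ)
    (hK : ∀ i j : Fin n, K i j =
      if x (i.1 + 1) ≤ x (j.1 + 1) then p (x (i.1 + 1)) * q (x (j.1 + 1))
      else p (x (j.1 + 1)) * q (x (i.1 + 1)))
    (hdet : IsUnit K.det) :
    (K⁻¹).IsSymm ∧ ∀ i j : Fin n, 2 ≤ |(i.1 : ℤ) - (j.1 : ℤ)| → K⁻¹ i j = 0 := by
  have hmono : StrictMono fun i : Fin n => x (i.1 + 1) := fun i j hij =>
    hx _ _ (by omega) (by omega) (by omega)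
  have hle : ∀ i j : Fin n, x (i.1 + 1) ≤ x (j.1 + 1) ↔ i ≤ j := fun i j => hmono.le_iff_le
  have hK' : ∀ i j : Fin n, K i j = if i ≤ j then p (x (i.1 + 1)) * q (x (j.1 + 1))
      else p (x (j.1 + 1)) * q (x (i.1 + 1)) := by
    intro i j
    simp only [hK, hle]
  have hsymm : K.IsSymm := by
    apply Matrix.IsSymm.ext
    intro i j
    rw [hK', hK']
    rcases lt_trichotomy i j with h | h | h
    · rw [if_neg h.not_ge, if_pos h.le]
    · rw [h]
    · rw [if_pos h.le, if_neg h.not_ge]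
  have hinv : (K⁻¹).IsSymm := by
    rw [Matrix.IsSymm, Matrix.transpose_nonsing_inv, hsymm.eq]
  have hup : ∀ i j : Fin n, i.1 + 2 ≤ j.1 → K⁻¹ i j = 0 := fun i j hij =>
    inv_upper_eq_zero hdet (a := fun i => p (x (i.1 + 1))) (b := fun i => q (x (i.1 + 1))) hK' hij
  refine ⟨hinv, fun i j hij => ?_⟩
  rcases le_abs.1 hij with h | h
  · rw [← hinv.apply]
    exact hup j i (by omega)
  · exact hup i j (by omega)
end

section
/- Let n ≥ 2 and let x_1 < x_2 < ... < x_n be real numbers. Let p, q : ℝ → ℝ and let K be the n×n real matrix with entries K_{ij} = p(x_i)q(x_j) if x_i ≤ x_j and K_{ij} = p(x_j)q(x_i) if x_i > x_j. Then det K = p(x_1)·q(x_n)·∏_{i=2}^{n} (p(x_i)q(x_{i−1}) − p(x_{i−1})q(x_i)). -/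
/-!
Write `a i = p (x (i+1))` and `b i = q (x (i+1))`, so that `K i j = a (min i j) * b (max i j)`.
The first column of `K` is `a 0 • b`; let `N` be `K` with that column replaced by `b`, so that
`det K = a 0 * det N`. Subtracting `a 1` times the first column of `N` from the second leaves
only the top entry `a 0 * b 1 - a 1 * b 0` in the second column. Expanding along it gives
`det N = (a 1 * b 0 - a 0 * b 1) * det N'`, where `N'` is the matrix of the same shape for the
shifted sequences. Induction on the size then evaluates `det N` without any division.
-/

/-- The single-pair matrix `a (min i j) * b (max i j)` with the factor `a 0` removed from its
first column. -/
def greenAux (m : ℕ) (a b : ℕ → ℝ) : Matrix (Fin m) (Fin m) ℝ :=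
  Matrix.of fun i j => if j.1 = 0 then b i else a (min i.1 j.1) * b (max i.1 j.1)

lemma det_greenAux (m : ℕ) : ∀ a b : ℕ → ℝ,
    (greenAux (m + 1) a b).det =
      b m * ∏ i ∈ Finset.range m, (a (i + 1) * b i - a i * b (i + 1)) := by
  induction m with
  | zero => intro a b; simp [greenAux]
  | succ m ih =>
    intro a b
    rw [← Matrix.det_updateCol_add_smul_self (greenAux (m + 2) a b)
      (show (1 : Fin (m + 2)) ≠ 0 by simp) (-a 1), Matrix.det_succ_column _ 1,
      Fin.sum_univ_succ, Finset.sum_eq_zero, add_zero]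
    · have hsub : ((greenAux (m + 2) a b).updateCol 1 fun k =>
          greenAux (m + 2) a b k 1 + (-a 1) • greenAux (m + 2) a b k 0).submatrix
          (Fin.succAbove 0) (Fin.succAbove 1) =
          greenAux (m + 1) (fun i => a (i + 1)) (fun i => b (i + 1)) := by
        ext i j
        rw [Matrix.submatrix_apply, Matrix.updateCol_ne (Fin.succAbove_ne _ _)]
        refine Fin.cases ?_ (fun j => ?_) j
        · simp [greenAux]
        · have h : (1 : Fin (m + 2)).succAbove j.succ = j.succ.succ := by
            rw [Fin.succAbove_of_lt_succ]
            simp [Fin.lt_def]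
          simp [h, greenAux]
      rw [hsub, ih, Finset.prod_range_succ']
      simp [greenAux]
      ring
    · intro i _
      simp [greenAux]

/-- For `n ≥ 2` and points `x 1 < ⋯ < x n`, the determinant of the matrix
`K` with `K i j = p (x i) * q (x j)` for `x i ≤ x j` and `p (x j) * q (x i)` otherwise equals
`p (x 1) * q (x n) * ∏_{i=2}^{n} (p (x i) * q (x (i-1)) - p (x (i-1)) * q (x i))`. -/
theorem stmt1 (n : ℕ) (hn : 2 ≤ n) (x : ℕ → ℝ)
    (hx : ∀ i j : ℕ, 1 ≤ i → i < j → j ≤ n → x i < x j)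
    (p q : ℝ → ℝ) (K : Matrix (Fin n) (Fin n) ℝ)
    (hK : ∀ i j : Fin n, K i j =
      if x (i.1 + 1) ≤ x (j.1 + 1) then p (x (i.1 + 1)) * q (x (j.1 + 1))
      else p (x (j.1 + 1)) * q (x (i.1 + 1))) :
    K.det = p (x 1) * q (x n) *
      ∏ i ∈ Finset.Icc 2 n, (p (x i) * q (x (i - 1)) - p (x (i - 1)) * q (x i)) := by
  obtain ⟨m, rfl⟩ : ∃ m, n = m + 1 := ⟨n - 1, by omega⟩
  set a : ℕ → ℝ := fun i => p (x (i + 1)) with ha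
  set b : ℕ → ℝ := fun i => q (x (i + 1)) with hb
  have hK' : K = (greenAux (m + 1) a b).updateCol 0
      (a 0 • fun i => greenAux (m + 1) a b i 0) := by
    ext i j
    have hle : x (i.1 + 1) ≤ x (j.1 + 1) ↔ i.1 ≤ j.1 := by
      constructor
      · intro h
        by_contra! hlt
        exact absurd (hx (j.1 + 1) (i.1 + 1) (by omega) (by omega) (by omega)) (not_lt.2 h)
      · intro h
        rcases h.eq_or_lt with h | h
        · rw [h]
        · exact (hx (i.1 + 1) (j.1 + 1) (by omega) (by omega) (by omega)).le
    have hmm : K i j = a (min i.1 j.1) * b (max i.1 j.1) := by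
      rw [hK]
      simp only [hle]
      split_ifs with h
      · rw [min_eq_left h, max_eq_right h]
      · rw [min_eq_right (by omega), max_eq_left (by omega)]
    rw [hmm, Matrix.updateCol_apply]
    split_ifs with h
    · subst h
      simp [greenAux]
    · simp [greenAux, h]
  have hself : (greenAux (m + 1) a b).updateCol 0 (fun i => greenAux (m + 1) a b i 0) =
      greenAux (m + 1) a b := Matrix.updateCol_eq_self _ _
  rw [hK', Matrix.det_updateCol_smul, hself, det_greenAux, ← mul_assoc,
    ← Finset.Ico_add_one_right_eq_Icc, Finset.prod_Ico_eq_prod_range]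
  congr 1
  refine Finset.prod_congr (by congr 1) fun i _ => ?_
  have h1 : 2 + i = i + 1 + 1 := by omega
  simp only [ha, hb, h1, Nat.add_sub_cancel]
end

section
/- Let n ≥ 2 and let x_1 < x_2 < ... < x_n be real numbers. Let p, q : ℝ → ℝ and let K be the n×n real matrix with entries K_{ij} = p(x_i)q(x_j) if x_i ≤ x_j and K_{ij} = p(x_j)q(x_i) if x_i > x_j. Then for every i with 2 ≤ i ≤ n, the determinant of the (n−1)×(n−1) submatrix of K obtained by deleting row i−1 and column i equals p(x_1)·q(x_n)·∏_{j=2, j≠i}^{n} (p(x_j)q(x_{j−1}) − p(x_{j−1})q(x_j)). -/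
/-!
Deleting row `r` and column `r + 1` of `K` leaves a matrix whose rows use the points `x (a k)` and
whose columns use the points `x (b l)`, where the increasing sequences `a` and `b` differ only at
position `r`. Hence its `(k, l)` entry is `p (x (a k)) * q (x (b l))` strictly above the diagonal
and `p (x (b l)) * q (x (a k))` on and below it, so it has the shape
`M k l = if k < l then A k * B l else C l * D k`.

For such a matrix of size `n + 1` the determinant is
`C 0 * D n * ∏_{k < n} (D k * C (k + 1) - A k * B (k + 1))`. The factor `C 0` comes out of the
first column, which becomes `D`. Subtracting `C 1` times that column from the next one leaves there
only the top entry `A 0 * B 1 - C 1 * D 0`; expanding along it gives a matrix of the same form, with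
first column `D`, of size one less (`det_normalized`). No division is involved, so no
nonvanishing hypothesis is needed.
-/

/-- The determinant of the matrix with entries `A k * B l` above the diagonal and `C l * D k` on and
below it, normalized so that its first column is `D` (that is, `C 0` is replaced by `1`). -/
theorem det_normalized (n : ℕ) : ∀ A B C D : ℕ → ℝ,
    (Matrix.of fun k l : Fin (n + 1) =>
      if l.1 = 0 then D k.1 else if k.1 < l.1 then A k.1 * B l.1 else C l.1 * D k.1).det =
    D n * ∏ k ∈ Finset.range n, (D k * C (k + 1) - A k * B (k + 1)) := by
  induction n with
  | zero => intro A B C D; simp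
  | succ n ih =>
    intro A B C D
    set M : Matrix (Fin (n + 2)) (Fin (n + 2)) ℝ := Matrix.of fun k l =>
      if l.1 = 0 then D k.1 else if k.1 < l.1 then A k.1 * B l.1 else C l.1 * D k.1 with hM
    have h01 : (1 : Fin (n + 2)) ≠ 0 := by simp
    rw [← Matrix.det_updateCol_add_smul_self M h01 (-C 1), Matrix.det_succ_column _ 1,
      Finset.sum_eq_single 0]
    · have hminor : ((M.updateCol 1 fun k => M k 1 + -C 1 • M k 0).submatrix
          (Fin.succAbove 0) (Fin.succAbove 1)).det =
          D (n + 1) * ∏ k ∈ Finset.range n,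
            (D (k + 1) * C (k + 2) - A (k + 1) * B (k + 2)) := by
        rw [← ih (fun k => A (k + 1)) (fun k => B (k + 1)) (fun k => C (k + 1))
          (fun k => D (k + 1))]
        congr 1
        ext k l
        refine Fin.cases ?_ (fun l => ?_) l
        · simp [hM]
        · have h : (1 : Fin (n + 2)).succAbove l.succ = l.succ.succ := by
            rw [← Fin.succ_zero_eq_one, Fin.succ_succAbove_succ, Fin.zero_succAbove]
          have h' : l.succ.succ ≠ (1 : Fin (n + 2)) := by
            simp [Fin.ext_iff]
          simp [hM, h, h']
      rw [hminor, Finset.prod_range_succ']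
      simp [hM]
      ring
    · intro k _ hk
      simp [hM, hk]
    · simp

theorem det_semiseparable (n : ℕ) (A B C D : ℕ → ℝ) :
    (Matrix.of fun k l : Fin (n + 1) =>
      if k.1 < l.1 then A k.1 * B l.1 else C l.1 * D k.1).det =
    C 0 * D n * ∏ k ∈ Finset.range n, (D k * C (k + 1) - A k * B (k + 1)) := by
  rw [mul_assoc, ← det_normalized n A B C D]
  set N : Matrix (Fin (n + 1)) (Fin (n + 1)) ℝ := Matrix.of fun k l =>
    if l.1 = 0 then D k.1 else if k.1 < l.1 then A k.1 * B l.1 else C l.1 * D k.1 with hN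
  have h : N.updateCol 0 (fun k => N k 0) = N := Matrix.updateCol_eq_self N 0
  rw [← h, ← Matrix.det_updateCol_smul]
  congr 1
  ext k l
  by_cases hl : l = 0
  · subst hl
    simp [hN]
  · simp [hN, hl]

/-- For `n = m + 1 ≥ 2` and points `x 1 < ⋯ < x n`, for every paper index
`i` with `2 ≤ i ≤ n`, the determinant of the submatrix of `K` obtained by deleting row `i - 1`
and column `i` equals `p (x 1) * q (x n) * ∏_{j=2, j≠i}^{n} (p_j q_{j-1} - p_{j-1} q_j)`.
Here the matrix is indexed by `Fin (m+1)` (0-based), `r` is the deleted row (0-based, paper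
index `r+1 = i-1`) and `c` the deleted column (0-based, paper index `c+1 = i`), with
`c = r + 1`. -/
theorem stmt2 (m : ℕ) (hm : 1 ≤ m) (x : ℕ → ℝ)
    (hx : ∀ i j : ℕ, 1 ≤ i → i < j → j ≤ m + 1 → x i < x j)
    (p q : ℝ → ℝ) (K : Matrix (Fin (m + 1)) (Fin (m + 1)) ℝ)
    (hK : ∀ i j : Fin (m + 1), K i j =
      if x (i.1 + 1) ≤ x (j.1 + 1) then p (x (i.1 + 1)) * q (x (j.1 + 1))
      else p (x (j.1 + 1)) * q (x (i.1 + 1))) :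
    ∀ r c : Fin (m + 1), c.1 = r.1 + 1 →
      (K.submatrix r.succAbove c.succAbove).det =
        p (x 1) * q (x (m + 1)) *
          ∏ j ∈ (Finset.Icc 2 (m + 1)).erase (c.1 + 1),
            (p (x j) * q (x (j - 1)) - p (x (j - 1)) * q (x j)) := by
  intro r c hc
  obtain ⟨n, rfl⟩ : ∃ n, m = n + 1 := ⟨m - 1, by omega⟩
  have hr : r.1 ≤ n := by omega
  -- The 1-based indices of the remaining rows and columns.
  let a : ℕ → ℕ := fun k => if k < r.1 then k + 1 else k + 2
  let b : ℕ → ℕ := fun l => if l ≤ r.1 then l + 1 else l + 2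
  have ha : ∀ k : Fin (n + 1), (r.succAbove k).1 + 1 = a k.1 := by
    intro k
    simp only [a, Fin.succAbove, Fin.lt_def, Fin.val_castSucc]
    split_ifs <;> simp
  have hb : ∀ l : Fin (n + 1), (c.succAbove l).1 + 1 = b l.1 := by
    intro l
    simp only [b, Fin.succAbove, Fin.lt_def, Fin.val_castSucc, hc, Nat.lt_succ_iff]
    split_ifs <;> simp
  have hle : ∀ i j : ℕ, 1 ≤ i → i ≤ n + 2 → 1 ≤ j → j ≤ n + 2 → (x i ≤ x j ↔ i ≤ j) := by
    intro i j hi hi' hj hj'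
    constructor
    · intro h
      by_contra! hlt
      exact absurd (hx j i hj hlt (by omega)) (not_lt.2 h)
    · intro h
      rcases h.eq_or_lt with rfl | h
      · exact le_rfl
      · exact (hx i j hi h (by omega)).le
  have hM : K.submatrix r.succAbove c.succAbove = Matrix.of fun k l : Fin (n + 1) =>
      if k.1 < l.1 then p (x (a k.1)) * q (x (b l.1)) else p (x (b l.1)) * q (x (a k.1)) := by
    ext k l
    have hk := k.2
    have hl := l.2
    have hak : 1 ≤ a k.1 ∧ a k.1 ≤ n + 2 := by simp only [a]; split_ifs <;> omega
    have hbl : 1 ≤ b l.1 ∧ b l.1 ≤ n + 2 := by simp only [b]; split_ifs <;> omega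
    simp only [Matrix.submatrix_apply, Matrix.of_apply, hK, ha, hb,
      hle _ _ hak.1 hak.2 hbl.1 hbl.2]
    -- `a k ≤ b l` is equivalent to `k < l`, except that `a k = b l` when `k = l ≠ r`.
    by_cases hkl : k.1 < l.1
    · have : a k.1 ≤ b l.1 := by simp only [a, b]; split_ifs <;> omega
      simp [hkl, this]
    · by_cases hab : a k.1 ≤ b l.1
      · have : a k.1 = b l.1 := by
          revert hab; simp only [a, b]; split_ifs <;> omega
        simp [this]
      · simp [hkl, hab]
  rw [hM, det_semiseparable n (fun k => p (x (a k))) (fun k => q (x (b k)))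
    (fun k => p (x (b k))) (fun k => q (x (a k)))]
  have hb0 : b 0 = 1 := by simp [b]
  have han : a n = n + 2 := by simp only [a]; split_ifs <;> omega
  simp only [hb0, han]
  congr 1
  -- The indices `b 1, …, b n` run through `{2, …, n + 2}` without `r + 2`, and `b (k + 1) = a k + 1`.
  refine Finset.prod_bij (fun k _ => b (k + 1)) ?_ ?_ ?_ ?_
  · intro k hk
    simp only [Finset.mem_range] at hk
    simp only [Finset.mem_erase, Finset.mem_Icc, b]
    split_ifs <;> omega
  · intro k _ k' _ h
    simp only [b] at h
    split_ifs at h <;> omega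
  · intro j hj
    simp only [Finset.mem_erase, Finset.mem_Icc] at hj
    refine ⟨if j ≤ r.1 + 1 then j - 2 else j - 3, ?_, ?_⟩
    · simp only [Finset.mem_range]; split_ifs <;> omega
    · simp only [b]; split_ifs <;> omega
  · intro k _
    have : b (k + 1) - 1 = a k := by simp only [a, b]; split_ifs <;> omega
    simp only [this]
    ring
end

section
/- Let n ≥ 3 and let x_1 < x_2 < ... < x_n be real numbers. Let p, q : ℝ → ℝ and let K be the n×n real matrix with entries K_{ij} = p(x_i)q(x_j) if x_i ≤ x_j and K_{ij} = p(x_j)q(x_i) if x_i > x_j. Write p_i = p(x_i) and q_i = q(x_i). If K is nonsingular, then the entries of K⁻¹ are: (K⁻¹)_{11} = p_2 / (p_1(p_2 q_1 − p_1 q_2)); (K⁻¹)_{ii} = (p_{i+1} q_{i−1} − p_{i−1} q_{i+1}) / ((p_i q_{i−1} − p_{i−1} q_i)(p_{i+1} q_i − p_i q_{i+1})) for 2 ≤ i ≤ n−1; (K⁻¹)_{nn} = q_{n−1} / (q_n(p_n q_{n−1} − p_{n−1} q_n)); (K⁻¹)_{i−1,i} = (K⁻¹)_{i,i−1} = −1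 / (p_i q_{i−1} − p_{i−1} q_i) for 2 ≤ i ≤ n; and (K⁻¹)_{ij} = 0 whenever |i − j| ≥ 2. -/
/-!
The kernel matrix is `K i j = P (min i j) * Q (max i j)`, so on the columns `m ≤ i` the rows
`i` and `i + 1` are multiples of `P`, and on the columns `m ≥ i + 1` they are multiples of `Q`.
Put `d k = P (k + 1) * Q k - P k * Q (k + 1)`.  A suitable combination of the rows `i - 1`, `i`,
`i + 1` of `K` is the `i`-th unit row vector; multiplying it by `K⁻¹` on the right expresses row
`i` of `K⁻¹` through at most three unit vectors, which gives all the entries at once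
(`comb_rows`, `row_first`, `row_mid`, `row_last`).

The denominators do not vanish: a relation between rows of the invertible matrix `K` is trivial.
If `P 0 = 0` or `Q (n - 1) = 0`, the first or last row is zero.  If `d k = 0`, the relations
`P (k + 1) K_k = P k K_{k+1}` and `Q (k + 1) K_k = Q k K_{k+1}` force `P k = Q k = 0`, and
row `k` is zero.
-/

/-- If a combination of three rows of `K` is `d` times the unit row vector at `i`, the same
combination of unit row vectors is `d` times row `i` of `K⁻¹`.  With `d = 0` this says that
relations between rows are trivial. -/
lemma comb_rows {n : ℕ} {K : Matrix (Fin n) (Fin n) ℝ} (hdet : IsUnit K.det)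
    (r s t i : Fin n) (a b c d : ℝ)
    (h : ∀ m, a * K r m + b * K s m + c * K t m = if m = i then d else 0) (j : Fin n) :
    (if r = j then a else 0) + (if s = j then b else 0) + (if t = j then c else 0)
      = d * K⁻¹ i j := by
  have hKM := Matrix.mul_nonsing_inv K hdet
  have e (u : Fin n) (a : ℝ) : (if u = j then a else 0) = ∑ m, a * K u m * K⁻¹ m j := by
    have := congrFun (congrFun hKM u) j
    rw [Matrix.mul_apply, Matrix.one_apply] at this
    simp only [mul_assoc, ← Finset.mul_sum, this]
    simp
  rw [e r a, e s b, e t c, ← Finset.sum_add_distrib, ← Finset.sum_add_distrib]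
  simp only [← add_mul, h]
  simp

section Kernel

variable {n : ℕ} {P Q : ℕ → ℝ} {K : Matrix (Fin n) (Fin n) ℝ}

lemma row_ne_zero (hdet : IsUnit K.det) (i : Fin n) (h : ∀ m, K i m = 0) : False := by
  have := comb_rows hdet i i i i 1 0 0 0 (by simp [h]) i
  simp at this

lemma P_zero_ne (hK : ∀ i j : Fin n, K i j = if i.1 ≤ j.1 then P i * Q j else P j * Q i)
    (hdet : IsUnit K.det) (hn : 0 < n) : P 0 ≠ 0 := by
  intro h
  exact row_ne_zero hdet ⟨0, hn⟩ fun m => by simp [hK, h]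

lemma Q_last_ne (hK : ∀ i j : Fin n, K i j = if i.1 ≤ j.1 then P i * Q j else P j * Q i)
    (hdet : IsUnit K.det) {k : ℕ} (hk : k + 1 = n) : Q k ≠ 0 := by
  intro h
  refine row_ne_zero hdet ⟨k, by omega⟩ fun m => ?_
  rw [hK]
  split_ifs with hm
  · have : m.1 = k := by have := m.2; simp only at hm; omega
    simp [this, h]
  · simp [h]

lemma d_ne (hK : ∀ i j : Fin n, K i j = if i.1 ≤ j.1 then P i * Q j else P j * Q i)
    (hdet : IsUnit K.det) {k : ℕ} (hk : k + 1 < n) :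
    P (k + 1) * Q k - P k * Q (k + 1) ≠ 0 := by
  intro h
  have key (a b : ℝ) (hP : a * P k + b * P (k + 1) = 0) (hQ : a * Q k + b * Q (k + 1) = 0) :
      b = 0 := by
    have := comb_rows hdet ⟨k, by omega⟩ ⟨k + 1, hk⟩ ⟨k, by omega⟩ ⟨k, by omega⟩ a b 0 0
      (fun m => by
        simp only [hK, ite_self]
        rcases Nat.lt_trichotomy m.1 k with hm | hm | hm
        · rw [if_neg (by omega), if_neg (by omega)]
          linear_combination P m * hQ
        · rw [if_pos (by omega), if_neg (by omega), hm]
          linear_combination P k * hQ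
        · rw [if_pos (by omega), if_pos (by omega)]
          linear_combination Q m * hP) ⟨k + 1, hk⟩
    simpa using this
  have hp := key (P (k + 1)) (-P k) (by ring) (by linarith)
  have hq := key (Q (k + 1)) (-Q k) (by linarith) (by ring)
  refine row_ne_zero hdet ⟨k, by omega⟩ fun m => ?_
  rw [neg_eq_zero] at hp hq
  simp [hK, hp, hq]

lemma row_first (hK : ∀ i j : Fin n, K i j = if i.1 ≤ j.1 then P i * Q j else P j * Q i)
    (hdet : IsUnit K.det) (hn : 1 < n) (i j : Fin n) (hi : i.1 = 0) :
    K⁻¹ i j = (if j.1 = 0 then P 1 / (P 0 * (P 1 * Q 0 - P 0 * Q 1)) else 0)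
      + (if j.1 = 1 then -1 / (P 1 * Q 0 - P 0 * Q 1) else 0) := by
  have h0 := P_zero_ne hK hdet (by omega)
  have hd : P 1 * Q 0 - P 0 * Q 1 ≠ 0 := d_ne hK hdet (k := 0) hn
  have := comb_rows hdet i ⟨1, hn⟩ i i (P 1 / (P 0 * (P 1 * Q 0 - P 0 * Q 1)))
    (-1 / (P 1 * Q 0 - P 0 * Q 1)) 0 1 (fun m => by
      simp only [hK, hi, Fin.ext_iff]
      rcases Nat.eq_zero_or_pos m.1 with hm | hm
      · simp only [hm]
        norm_num
        field_simp
        ring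
      · rw [if_pos (by omega), if_pos (by omega), if_neg (by omega)]
        field_simp
        ring) j
  simp only [Fin.ext_iff, hi, ite_self, one_mul, add_zero] at this
  rw [← this]
  simp only [eq_comm]

lemma row_mid (hK : ∀ i j : Fin n, K i j = if i.1 ≤ j.1 then P i * Q j else P j * Q i)
    (hdet : IsUnit K.det) {k : ℕ} (hk : k + 2 < n) (i j : Fin n) (hi : i.1 = k + 1) :
    K⁻¹ i j = (if j.1 = k then -1 / (P (k + 1) * Q k - P k * Q (k + 1)) else 0)
      + (if j.1 = k + 1 then (P (k + 2) * Q k - P k * Q (k + 2)) /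
          ((P (k + 1) * Q k - P k * Q (k + 1)) * (P (k + 2) * Q (k + 1) - P (k + 1) * Q (k + 2)))
          else 0)
      + (if j.1 = k + 2 then -1 / (P (k + 2) * Q (k + 1) - P (k + 1) * Q (k + 2)) else 0) := by
  have hd : P (k + 1) * Q k - P k * Q (k + 1) ≠ 0 := d_ne hK hdet (by omega)
  have hd' : P (k + 2) * Q (k + 1) - P (k + 1) * Q (k + 2) ≠ 0 := d_ne hK hdet (k := k + 1) hk
  have := comb_rows hdet ⟨k, by omega⟩ i ⟨k + 2, hk⟩ i
    (-1 / (P (k + 1) * Q k - P k * Q (k + 1)))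
    ((P (k + 2) * Q k - P k * Q (k + 2)) /
      ((P (k + 1) * Q k - P k * Q (k + 1)) * (P (k + 2) * Q (k + 1) - P (k + 1) * Q (k + 2))))
    (-1 / (P (k + 2) * Q (k + 1) - P (k + 1) * Q (k + 2))) 1 (fun m => by
      simp only [hK, hi, Fin.ext_iff]
      rcases Nat.lt_trichotomy m.1 (k + 1) with hm | hm | hm
      · rw [if_neg (c := k + 1 ≤ m.1) (by omega), if_neg (c := k + 2 ≤ m.1) (by omega),
          if_neg (c := m.1 = k + 1) (by omega)]
        have : (if k ≤ m.1 then P k * Q m else P m * Q k) = P m * Q k := by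
          split_ifs
          · rw [show m.1 = k by omega]
          · rfl
        rw [this]
        -- The denominators must be atoms for the fractions to be cleared.
        generalize e : P (k + 1) * Q k - P k * Q (k + 1) = D at hd ⊢
        generalize e' : P (k + 2) * Q (k + 1) - P (k + 1) * Q (k + 2) = D' at hd' ⊢
        field_simp
        subst e e'
        ring
      · rw [if_pos (by omega), if_pos (by omega), if_neg (by omega), if_pos hm, hm]
        generalize e : P (k + 1) * Q k - P k * Q (k + 1) = D at hd ⊢
        generalize e' : P (k + 2) * Q (k + 1) - P (k + 1) * Q (k + 2) = D' at hd' ⊢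
        field_simp
        subst e e'
        ring
      · rw [if_pos (by omega), if_pos (by omega), if_pos (by omega), if_neg (by omega)]
        generalize e : P (k + 1) * Q k - P k * Q (k + 1) = D at hd ⊢
        generalize e' : P (k + 2) * Q (k + 1) - P (k + 1) * Q (k + 2) = D' at hd' ⊢
        field_simp
        subst e e'
        ring) j
  simp only [Fin.ext_iff, hi, one_mul] at this
  rw [← this]
  simp only [eq_comm]

lemma row_last (hK : ∀ i j : Fin n, K i j = if i.1 ≤ j.1 then P i * Q j else P j * Q i)
    (hdet : IsUnit K.det) {k : ℕ} (hk : k + 2 = n) (i j : Fin n) (hi : i.1 = k + 1) :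
    K⁻¹ i j = (if j.1 = k then -1 / (P (k + 1) * Q k - P k * Q (k + 1)) else 0)
      + (if j.1 = k + 1 then Q k / (Q (k + 1) * (P (k + 1) * Q k - P k * Q (k + 1))) else 0) := by
  have hd : P (k + 1) * Q k - P k * Q (k + 1) ≠ 0 := d_ne hK hdet (by omega)
  have hq : Q (k + 1) ≠ 0 := Q_last_ne hK hdet hk
  have := comb_rows hdet ⟨k, by omega⟩ i i i (-1 / (P (k + 1) * Q k - P k * Q (k + 1)))
    (Q k / (Q (k + 1) * (P (k + 1) * Q k - P k * Q (k + 1)))) 0 1 (fun m => by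
      simp only [hK, hi, Fin.ext_iff]
      rcases Nat.lt_or_ge m.1 (k + 1) with hm | hm
      · rw [if_neg (c := k + 1 ≤ m.1) (by omega), if_neg (c := m.1 = k + 1) (by omega)]
        have : (if k ≤ m.1 then P k * Q m else P m * Q k) = P m * Q k := by
          split_ifs
          · rw [show m.1 = k by omega]
          · rfl
        rw [this]
        field_simp
        ring
      · have hm' : m.1 = k + 1 := by have := m.2; omega
        rw [if_pos (by omega), if_pos (by omega), if_pos hm', hm']
        field_simp
        ring) j
  simp only [Fin.ext_iff, hi, ite_self, one_mul, add_zero] at this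
  rw [← this]
  simp only [eq_comm]

end Kernel


/-- For `n ≥ 3`, points `x 1 < ⋯ < x n`, and the matrix `K` built from an
MCF-form kernel, if `K` is nonsingular then the entries of `K⁻¹` are given explicitly:
`(K⁻¹)₁₁ = p₂ / (p₁ (p₂ q₁ - p₁ q₂))`,
`(K⁻¹)ᵢᵢ = (p_{i+1} q_{i-1} - p_{i-1} q_{i+1}) / ((p_i q_{i-1} - p_{i-1} q_i)(p_{i+1} q_i - p_i q_{i+1}))`
for `2 ≤ i ≤ n - 1`, `(K⁻¹)ₙₙ = q_{n-1} / (qₙ (pₙ q_{n-1} - p_{n-1} qₙ))`,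
`(K⁻¹)_{i-1,i} = (K⁻¹)_{i,i-1} = -1 / (p_i q_{i-1} - p_{i-1} q_i)` for `2 ≤ i ≤ n`,
and `(K⁻¹)_{ij} = 0` for `|i - j| ≥ 2`.  (Matrix index `i : Fin n` ↔ paper index `i + 1`.) -/
theorem stmt3 (n : ℕ) (hn : 3 ≤ n) (x : ℕ → ℝ)
    (hx : ∀ i j : ℕ, 1 ≤ i → i < j → j ≤ n → x i < x j)
    (p q : ℝ → ℝ) (K : Matrix (Fin n) (Fin n) ℝ)
    (hK : ∀ i j : Fin n, K i j =
      if x (i.1 + 1) ≤ x (j.1 + 1) then p (x (i.1 + 1)) * q (x (j.1 + 1))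
      else p (x (j.1 + 1)) * q (x (i.1 + 1)))
    (hdet : IsUnit K.det) :
    (∀ i : Fin n, i.1 = 0 →
      K⁻¹ i i = p (x 2) / (p (x 1) * (p (x 2) * q (x 1) - p (x 1) * q (x 2)))) ∧
    (∀ i : Fin n, 1 ≤ i.1 → i.1 ≤ n - 2 →
      K⁻¹ i i = (p (x (i.1 + 2)) * q (x i.1) - p (x i.1) * q (x (i.1 + 2))) /
        ((p (x (i.1 + 1)) * q (x i.1) - p (x i.1) * q (x (i.1 + 1))) *
          (p (x (i.1 + 2)) * q (x (i.1 + 1)) - p (x (i.1 + 1)) * q (x (i.1 + 2))))) ∧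
    (∀ i : Fin n, i.1 = n - 1 →
      K⁻¹ i i = q (x (n - 1)) / (q (x n) * (p (x n) * q (x (n - 1)) - p (x (n - 1)) * q (x n)))) ∧
    (∀ i j : Fin n, j.1 = i.1 + 1 →
      K⁻¹ i j = -1 / (p (x (j.1 + 1)) * q (x (i.1 + 1)) - p (x (i.1 + 1)) * q (x (j.1 + 1))) ∧
      K⁻¹ j i = -1 / (p (x (j.1 + 1)) * q (x (i.1 + 1)) - p (x (i.1 + 1)) * q (x (j.1 + 1)))) ∧
    (∀ i j : Fin n, 2 ≤ |(i.1 : ℤ) - (j.1 : ℤ)| → K⁻¹ i j = 0) := by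
  have hK' : ∀ i j : Fin n, K i j = if i.1 ≤ j.1
      then (fun k => p (x (k + 1))) i.1 * (fun k => q (x (k + 1))) j.1
      else (fun k => p (x (k + 1))) j.1 * (fun k => q (x (k + 1))) i.1 := by
    intro i j
    rw [hK]
    have hle : x (i.1 + 1) ≤ x (j.1 + 1) ↔ i.1 ≤ j.1 := by
      constructor
      · intro h
        by_contra hlt
        exact absurd (hx (j.1 + 1) (i.1 + 1) (by omega) (by omega) (by omega)) (not_lt.2 h)
      · intro h
        rcases h.eq_or_lt with h | h
        · rw [h]
        · exact (hx (i.1 + 1) (j.1 + 1) (by omega) (by omega) (by omega)).le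
    simp only [hle]
  have first := row_first
    (P := fun k => p (x (k + 1))) (Q := fun k => q (x (k + 1))) hK' hdet (by omega)
  have mid := fun k (hk : k + 2 < n) => row_mid
    (P := fun k => p (x (k + 1))) (Q := fun k => q (x (k + 1))) hK' hdet hk
  have last := fun k (hk : k + 2 = n) => row_last
    (P := fun k => p (x (k + 1))) (Q := fun k => q (x (k + 1))) hK' hdet hk
  refine ⟨fun i hi => ?_, fun i h1 h2 => ?_, fun i hi => ?_, fun i j hij => ⟨?_, ?_⟩,
    fun i j hij => ?_⟩
  · rw [first i i hi]
    simp [hi]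
  · obtain ⟨k, hk⟩ : ∃ k, i.1 = k + 1 := ⟨i.1 - 1, by omega⟩
    rw [mid k (by omega) i i hk]
    simp [hk]
  · obtain ⟨k, rfl⟩ : ∃ k, n = k + 2 := ⟨n - 2, by omega⟩
    have hk : i.1 = k + 1 := by omega
    rw [last k rfl i i hk]
    simp [hk]
  · rcases Nat.eq_zero_or_pos i.1 with h0 | h0
    · rw [first i j h0]
      simp [hij, h0]
    · obtain ⟨k, hk⟩ : ∃ k, i.1 = k + 1 := ⟨i.1 - 1, by omega⟩
      rw [mid k (by omega) i j hk, if_neg (by omega), if_neg (by omega), if_pos (by omega)]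
      simp [hij, hk]
  · rcases Nat.lt_or_ge (i.1 + 2) n with h | h
    · rw [mid i.1 h j i hij]
      simp [hij]
    · rw [last i.1 (by omega) j i hij]
      simp [hij]
  · rw [le_abs] at hij
    rcases Nat.eq_zero_or_pos i.1 with h0 | h0
    · rw [first i j h0, if_neg (by omega), if_neg (by omega), add_zero]
    · obtain ⟨k, hk⟩ : ∃ k, i.1 = k + 1 := ⟨i.1 - 1, by omega⟩
      rcases Nat.lt_or_ge (k + 2) n with h | h
      · rw [mid k h i j hk, if_neg (by omega), if_neg (by omega), if_neg (by omega)]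
        simp
      · rw [last k (by omega) i j hk, if_neg (by omega), if_neg (by omega), add_zero]
end

section
/- Let L < U (where L may be −∞ and U may be +∞) and let p, q be continuous real-valued functions on the open interval (L,U). Then the following are equivalent: (a) for every n ≥ 2 and every choice of n distinct points x_1 < ... < x_n in (L,U), the n×n matrix K with entries K_{ij} = p(x_i)q(x_j) if x_i ≤ x_j and K_{ij} = p(x_j)q(x_i) if x_i > x_j is positive definite; (b) p and q satisfy the MCF conditions on (L,U), i.e., for all x, y ∈ (L,U): (i) p(x)q(y) − p(y)q(x) < 0 whenever x < y, and (ii) p(x)q(y) > 0. -/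
/-!
Under the MCF conditions `q` has constant sign and `r = p / q` is positive and strictly increasing,
so `K i j = r (min (x i) (x j)) * q (x i) * q (x j)`: up to a diagonal congruence `K` is the
covariance matrix of Brownian motion at the times `r (x i)`. Its quadratic form at `w` is
`∑ k, (r k - r (k - 1)) * (∑ i ≥ k, w i) ^ 2` (with the convention `r (-1) = 0`), which is positive
for `w ≠ 0`; `sum_min_pos` carries this out by peeling off one term at a time.

Conversely, the case `n = 2` gives `p x * q x > 0` everywhere and, for `x < y`,
`p x * q y * (p y * q x - p x * q y) > 0`. By the intermediate value theorem the nowhere vanishing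
function `p` has constant sign, so `p x * q y` has the sign of `p y * q y`, which is positive, and
then the determinant inequality yields the monotonicity condition.
-/

/-- The form `∑ i j, r (min i j) w i w j` is positive definite for `r` positive and strictly
increasing: subtracting `r 0 * (∑ i, w i) ^ 2` leaves the same form for the sequence
`r (i + 1) - r 0` and the tail of `w`. -/
theorem sum_min_pos (n : ℕ) (r w : Fin n → ℝ) (hr : StrictMono r) (h0 : ∀ i, 0 < r i)
    (hw : w ≠ 0) : 0 < ∑ i, ∑ j, r (min i j) * w i * w j := by
  induction n with
  | zero => exact absurd (Subsingleton.elim w 0) hw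
  | succ n ih =>
    have key : ∑ i, ∑ j, r (min i j) * w i * w j = r 0 * (∑ i, w i) ^ 2 +
        ∑ i : Fin n, ∑ j : Fin n, (r (min i j).succ - r 0) * w i.succ * w j.succ := by
      have hsq : r 0 * (∑ i, w i) ^ 2 = ∑ i, ∑ j, r 0 * w i * w j := by
        rw [sq, Finset.sum_mul_sum, Finset.mul_sum]
        simp only [Finset.mul_sum, mul_assoc]
      have hmin : ∀ i j : Fin n, min i.succ j.succ = (min i j).succ := fun i j =>
        ((Fin.strictMono_succ).monotone.map_min).symm
      rw [hsq, ← sub_eq_iff_eq_add', ← Finset.sum_sub_distrib]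
      simp only [← Finset.sum_sub_distrib, ← sub_mul]
      simp [Fin.sum_univ_succ, hmin]
    rw [key]
    by_cases ht : (fun i : Fin n => w i.succ) = 0
    · have ht' : ∀ i : Fin n, w i.succ = 0 := congrFun ht
      have hw0 : w 0 ≠ 0 := fun h => hw (funext fun i => Fin.cases h ht' i)
      have := h0 0
      simp only [Fin.sum_univ_succ, ht', Finset.sum_const_zero, mul_zero, add_zero]
      positivity
    · have := ih (fun i => r i.succ - r 0) (fun i => w i.succ)
        (fun i j hij => sub_lt_sub_right (hr (Fin.succ_lt_succ_iff.2 hij)) _)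
        (fun i => sub_pos.2 (hr (Fin.succ_pos i))) ht
      have := h0 0
      positivity

/-- Let `L < U` in `EReal` (so `L` may be `-∞`, `U` may be `+∞`) and let
`p, q` be continuous on the open interval `(L, U) ⊆ ℝ`.  Then the following are equivalent:
(a) for every `n ≥ 2` and points `x 1 < ⋯ < x n` in `(L, U)`, the matrix `K` with
`K i j = p (x i) q (x j)` if `x i ≤ x j` and `p (x j) q (x i)` otherwise is positive definite;
(b) `p, q` satisfy the MCF conditions on `(L, U)`:
(i) `p x * q y - p y * q x < 0` whenever `x < y`, and (ii) `p x * q y > 0`. -/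
theorem stmt4 (L U : EReal) (hLU : L < U) (p q : ℝ → ℝ)
    (hp : ContinuousOn p {x : ℝ | L < (x : EReal) ∧ (x : EReal) < U})
    (hq : ContinuousOn q {x : ℝ | L < (x : EReal) ∧ (x : EReal) < U}) :
    (∀ n : ℕ, 2 ≤ n → ∀ x : ℕ → ℝ,
      (∀ i : ℕ, 1 ≤ i → i ≤ n → L < (x i : EReal) ∧ (x i : EReal) < U) →
      (∀ i j : ℕ, 1 ≤ i → i < j → j ≤ n → x i < x j) →
      (Matrix.of fun i j : Fin n =>
        if x (i.1 + 1) ≤ x (j.1 + 1) then p (x (i.1 + 1)) * q (x (j.1 + 1))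
        else p (x (j.1 + 1)) * q (x (i.1 + 1))).PosDef) ↔
    ((∀ x y : ℝ, L < (x : EReal) → (x : EReal) < U → L < (y : EReal) → (y : EReal) < U →
        x < y → p x * q y - p y * q x < 0) ∧
     (∀ x y : ℝ, L < (x : EReal) → (x : EReal) < U → L < (y : EReal) → (y : EReal) < U →
        p x * q y > 0)) := by
  constructor
  · intro H
    set S : Set ℝ := {x : ℝ | L < (x : EReal) ∧ (x : EReal) < U} with hS
    have two : ∀ x ∈ S, ∀ y ∈ S, x < y → 0 < p x * q x ∧ 0 < p y * q y ∧
        0 < p x * q y * (p y * q x - p x * q y) := by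
      intro x hx y hy hxy
      have h := H 2 le_rfl (fun i => if i ≤ 1 then x else y)
        (by intro i _ _; split_ifs; exacts [hx, hy])
        (by
          intro i j hi hij hj
          obtain rfl : i = 1 := by omega
          obtain rfl : j = 2 := by omega
          simpa using hxy)
      have h1 := h.diag_pos (i := 0)
      have h2 := h.diag_pos (i := 1)
      have h3 := h.det_pos
      simp [Matrix.det_fin_two, hxy.not_ge, hxy.le] at h1 h2 h3
      exact ⟨h1, h2, by linarith⟩
    have diag : ∀ x ∈ S, 0 < p x * q x := by
      intro x hx
      obtain ⟨y, hxy, hyU⟩ := EReal.lt_iff_exists_real_btwn.1 hx.2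
      exact (two x hx y ⟨hx.1.trans hxy, hyU⟩ (EReal.coe_lt_coe_iff.1 hxy)).1
    have hconn : IsPreconnected S := by
      refine Set.OrdConnected.isPreconnected ⟨fun a ha b hb c hc => ?_⟩
      exact ⟨ha.1.trans_le (EReal.coe_le_coe_iff.2 hc.1),
        (EReal.coe_le_coe_iff.2 hc.2).trans_lt hb.2⟩
    -- A sign change of `p` would force a zero of `p`, contradicting `p z * q z > 0`.
    have zero : ∀ x ∈ S, ∀ y ∈ S, p x ≤ 0 → 0 ≤ p y → False := by
      intro x hx y hy h1 h2
      obtain ⟨z, hz, hz0⟩ := hconn.intermediate_value hx hy hp ⟨h1, h2⟩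
      have := diag z hz
      simp [hz0] at this
    have pos : ∀ x ∈ S, ∀ y ∈ S, 0 < p x * q y := by
      intro x hx y hy
      have hd := diag y hy
      rcases lt_or_ge 0 (p y) with h | h
      · have hx0 : 0 < p x := not_le.1 fun h' => zero x hx y hy h' h.le
        exact mul_pos hx0 (pos_of_mul_pos_right hd h.le)
      · have hx0 : p x < 0 := not_le.1 fun h' => zero y hy x hx h h'
        exact mul_pos_of_neg_of_neg hx0 (neg_of_mul_pos_right hd h)
    refine ⟨fun x y hx hx' hy hy' hxy => ?_, fun x y hx hx' hy hy' => pos x ⟨hx, hx'⟩ y ⟨hy, hy'⟩⟩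
    have h1 := pos x ⟨hx, hx'⟩ y ⟨hy, hy'⟩
    have h2 := pos_of_mul_pos_right (two x ⟨hx, hx'⟩ y ⟨hy, hy'⟩ hxy).2.2 h1.le
    linarith
  · rintro ⟨h1, h2⟩ n - x hx hmono
    have hxi : ∀ i : Fin n, L < (x (i.1 + 1) : EReal) ∧ (x (i.1 + 1) : EReal) < U :=
      fun i => hx _ (by omega) (by omega)
    have hlt : ∀ i j : Fin n, i < j → x (i.1 + 1) < x (j.1 + 1) :=
      fun i j hij => hmono _ _ (by omega) (by omega) (by omega)
    have hpq : ∀ i j : Fin n, 0 < p (x (i.1 + 1)) * q (x (j.1 + 1)) :=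
      fun i j => h2 _ _ (hxi i).1 (hxi i).2 (hxi j).1 (hxi j).2
    have hq0 : ∀ i : Fin n, q (x (i.1 + 1)) ≠ 0 := fun i => right_ne_zero_of_mul (hpq i i).ne'
    have hqq : ∀ i j : Fin n, 0 < q (x (i.1 + 1)) * q (x (j.1 + 1)) := by
      intro i j
      -- `(p x_i * q x_i) * (p x_i * q x_j)` is `q x_i * q x_j` times a square.
      have hprod := mul_pos (hpq i i) (hpq i j)
      have hpi : 0 < p (x (i.1 + 1)) ^ 2 := sq_pos_of_ne_zero (left_ne_zero_of_mul (hpq i i).ne')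
      nlinarith
    set r : Fin n → ℝ := fun i => p (x (i.1 + 1)) / q (x (i.1 + 1)) with hr
    have hr0 : ∀ i, 0 < r i := by
      intro i
      have := div_pos (hpq i i) (hqq i i)
      rwa [mul_div_mul_right _ _ (hq0 i)] at this
    have hrm : StrictMono r := by
      intro i j hij
      have hd := h1 _ _ (hxi i).1 (hxi i).2 (hxi j).1 (hxi j).2 (hlt i j hij)
      rw [← sub_neg, hr]
      dsimp only
      rw [div_sub_div _ _ (hq0 i) (hq0 j)]
      exact div_neg_of_neg_of_pos (by linarith) (hqq i j)
    have hK : ∀ i j : Fin n, (if x (i.1 + 1) ≤ x (j.1 + 1) then p (x (i.1 + 1)) * q (x (j.1 + 1))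
        else p (x (j.1 + 1)) * q (x (i.1 + 1))) =
        r (min i j) * q (x (i.1 + 1)) * q (x (j.1 + 1)) := by
      intro i j
      have hi := hq0 i
      have hj := hq0 j
      rcases le_or_gt i j with h | h
      · have hle : x (i.1 + 1) ≤ x (j.1 + 1) := by
          rcases h.eq_or_lt with rfl | h
          exacts [le_rfl, (hlt i j h).le]
        rw [if_pos hle, min_eq_left h, hr]
        field_simp
      · rw [if_neg (hlt j i h).not_ge, min_eq_right h.le, hr]
        field_simp
    refine Matrix.PosDef.of_dotProduct_mulVec_pos ?_ fun v hv => ?_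
    · refine Matrix.IsHermitian.ext fun i j => ?_
      simp only [Matrix.of_apply, hK, star_trivial, min_comm j i]
      ring
    · have hw : (fun i : Fin n => q (x (i.1 + 1)) * v i) ≠ 0 := fun h =>
        hv (funext fun i => (mul_eq_zero.1 (congrFun h i)).resolve_left (hq0 i))
      refine (sum_min_pos n r _ hrm hr0 hw).trans_eq ?_
      simp only [dotProduct, Matrix.mulVec, Matrix.of_apply, hK, star_trivial, Pi.star_apply,
        Finset.mul_sum]
      refine Finset.sum_congr rfl fun i _ => Finset.sum_congr rfl fun j _ => ?_
      ring
end

section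
/- Let n ≥ 3, θ > 0, σ > 0, h > 0, and x_i = i·h for i = 1, ..., n. Let K be the n×n matrix with entries K_{ij} = (σ²/(2θ))·exp(−θ·|x_i − x_j|) (the stationary covariance matrix of the Ornstein–Uhlenbeck process at the points x_1, ..., x_n). Then K is invertible and K⁻¹ = (θ/(σ²·sinh(θh)))·T, where T is the tridiagonal matrix with T_{11} = T_{nn} = exp(θh), T_{ii} = 2·cosh(θh) for 2 ≤ i ≤ n−1, T_{i,i+1} = T_{i+1,i} = −1 for 1 ≤ i ≤ n−1, and T_{ij} = 0 whenever |i − j| ≥ 2. -/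
/-!
With `a = θ h` the covariance matrix is `σ² / (2θ)` times the matrix of `exp (-a |i - j|)`.
As a function of `i`, `exp (-a |i - j|)` is geometric with ratio `exp a` for `i ≤ j` and with ratio
`exp (-a)` for `i ≥ j` (`ouKernel_succ_of_lt`, `ouKernel_succ_of_le`).  Both geometric sequences
are annihilated by the second-order difference operator with coefficients `-1, 2 cosh a, -1`, so
the tridiagonal matrix applied to the kernel vanishes except at the kink `i = j`, where it equals
`exp a - exp (-a) = 2 sinh a`; the corner entries `exp a` play the same role at the two
ends (`sum_ouTri_mul_ouKernel`).  Hence the claimed matrix is a left inverse.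
-/

/-- The kernel `exp (-a |i - j|)` on natural-number indices. -/
noncomputable def ouKernel (a : ℝ) (i j : ℕ) : ℝ := Real.exp (-a * |(i : ℝ) - j|)

/-- The entries of the `n × n` tridiagonal matrix, indexed by natural numbers from `0`. -/
noncomputable def ouTri (a : ℝ) (n i k : ℕ) : ℝ :=
  if i = k then (if i = 0 ∨ i = n - 1 then Real.exp a else 2 * Real.cosh a)
  else if i + 1 = k ∨ k + 1 = i then -1 else 0

lemma ouKernel_self (a : ℝ) (i : ℕ) : ouKernel a i i = 1 := by simp [ouKernel]

lemma ouKernel_succ_of_lt (a : ℝ) {i j : ℕ} (hij : i < j) :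
    ouKernel a (i + 1) j = Real.exp a * ouKernel a i j := by
  have h1 : (i : ℝ) + 1 ≤ j := by exact_mod_cast hij
  unfold ouKernel
  rw [← Real.exp_add, abs_of_nonpos (by push_cast; linarith), abs_of_nonpos (by linarith)]
  congr 1; push_cast; ring

lemma ouKernel_succ_of_le (a : ℝ) {i j : ℕ} (hji : j ≤ i) :
    ouKernel a (i + 1) j = Real.exp (-a) * ouKernel a i j := by
  have h1 : (j : ℝ) ≤ i := by exact_mod_cast hji
  unfold ouKernel
  rw [← Real.exp_add, abs_of_nonneg (by push_cast; linarith), abs_of_nonneg (by linarith)]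
  congr 1; push_cast; ring

/-- A row of the tridiagonal matrix times a vector involves only the diagonal entry and the two
neighbours, where a neighbour outside `0, …, n - 1` contributes nothing. -/
lemma sum_ouTri_mul (a : ℝ) {n i : ℕ} (hi : i < n) (f : ℕ → ℝ) :
    ∑ k ∈ Finset.range n, ouTri a n i k * f k =
      (if i = 0 ∨ i = n - 1 then Real.exp a else 2 * Real.cosh a) * f i
        - (if i + 1 < n then f (i + 1) else 0) - (if 1 ≤ i then f (i - 1) else 0) := by
  have key : ∀ k, ouTri a n i k * f k =
      (if i = k then (if i = 0 ∨ i = n - 1 then Real.exp a else 2 * Real.cosh a) * f k else 0)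
        - (if i + 1 = k then f k else 0)
        - (if i - 1 = k then (if 1 ≤ i then f k else 0) else 0) := by
    intro k
    unfold ouTri
    by_cases h1 : i = k
    · have h2 : i + 1 ≠ k := by omega
      by_cases h3 : 1 ≤ i
      · have h4 : i - 1 ≠ k := by omega
        rw [if_pos h1, if_pos h1, if_neg h2, if_neg h4]; ring
      · rw [if_pos h1, if_pos h1, if_neg h2, if_neg h3, ite_self]; ring
    · rw [if_neg h1, if_neg h1]
      by_cases h2 : i + 1 = k
      · have h4 : i - 1 ≠ k := by omega
        rw [if_pos (Or.inl h2), if_pos h2, if_neg h4]; ring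
      · rw [if_neg h2]
        by_cases h3 : k + 1 = i
        · have h4 : i - 1 = k := by omega
          have h5 : 1 ≤ i := by omega
          rw [if_pos (Or.inr h3), if_pos h4, if_pos h5]; ring
        · have h4 : ¬ (i - 1 = k) := by omega
          rw [if_neg (by tauto), if_neg h4]; ring
  have h1 : i - 1 < n := by omega
  simp only [key, Finset.sum_sub_distrib, Finset.sum_ite_eq, Finset.mem_range, hi, h1, if_true]

lemma sum_ouTri_mul_ouKernel (a : ℝ) {n i j : ℕ} (hn : 2 ≤ n) (hi : i < n) (hj : j < n) :
    ∑ k ∈ Finset.range n, ouTri a n i k * ouKernel a k j =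
      if i = j then 2 * Real.sinh a else 0 := by
  have hE : Real.exp a * Real.exp (-a) = 1 := by rw [← Real.exp_add]; simp
  have hs : 2 * Real.sinh a = Real.exp a - Real.exp (-a) := by rw [Real.sinh_eq]; ring
  have hc : 2 * Real.cosh a = Real.exp a + Real.exp (-a) := by rw [Real.cosh_eq]; ring
  rw [sum_ouTri_mul a hi (fun k => ouKernel a k j), hs, hc]
  rcases i with _ | m
  · have h1 : 0 + 1 < n := by omega
    rw [if_pos (Or.inl rfl), if_pos h1, if_neg (by omega : ¬ 1 ≤ 0)]
    by_cases h0 : 0 = j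
    · subst h0
      rw [ouKernel_succ_of_le a le_rfl, ouKernel_self]; simp
    · rw [ouKernel_succ_of_lt a (by omega), if_neg h0]; ring
  · rw [if_pos (by omega : 1 ≤ m + 1), Nat.add_sub_cancel]
    by_cases hl : m + 1 + 1 < n
    · rw [if_neg (by omega), if_pos hl]
      rcases lt_trichotomy (m + 1) j with h | h | h
      · rw [if_neg (by omega), ouKernel_succ_of_lt a h, ouKernel_succ_of_lt a (by omega : m < j)]
        linear_combination ouKernel a m j * hE
      · have h1 := ouKernel_succ_of_lt a (by omega : m < j)
        rw [if_pos h, ouKernel_succ_of_le a h.ge]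
        rw [h, ouKernel_self] at h1 ⊢
        linear_combination Real.exp (-a) * h1 + ouKernel a m j * hE
      · rw [if_neg (by omega), ouKernel_succ_of_le a h.le, ouKernel_succ_of_le a (by omega : j ≤ m)]
        linear_combination ouKernel a m j * hE
    · rw [if_pos (by omega), if_neg hl]
      by_cases h : m + 1 = j
      · have h1 := ouKernel_succ_of_lt a (by omega : m < j)
        rw [if_pos h]
        rw [h, ouKernel_self] at h1 ⊢
        linear_combination Real.exp (-a) * h1 + ouKernel a m j * hE
      · rw [if_neg h, ouKernel_succ_of_le a (by omega : j ≤ m)]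
        linear_combination ouKernel a m j * hE

/-- Stationary Ornstein–Uhlenbeck covariance matrix at equally spaced points
`x_i = i h`: `K i j = (σ² / (2θ)) exp (-θ |x_i - x_j|)`.  Then `K` is invertible and
`K⁻¹ = (θ / (σ² sinh (θ h))) • T` where `T` is tridiagonal with `T₁₁ = Tₙₙ = exp (θ h)`,
interior diagonal `2 cosh (θ h)`, off-diagonal `-1`, and `0` elsewhere.
(Matrix index `i : Fin n` ↔ paper index `i + 1`.) -/
theorem stmt8 (n : ℕ) (hn : 3 ≤ n) (θ σ h : ℝ) (hθ : 0 < θ) (hσ : 0 < σ) (hh : 0 < h)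
    (K : Matrix (Fin n) (Fin n) ℝ)
    (hK : ∀ i j : Fin n, K i j =
      σ ^ 2 / (2 * θ) * Real.exp (-θ * |((i.1 + 1 : ℝ) * h) - ((j.1 + 1 : ℝ) * h)|)) :
    IsUnit K.det ∧ ∀ i j : Fin n,
      K⁻¹ i j = θ / (σ ^ 2 * Real.sinh (θ * h)) *
        (if i = j then
          (if i.1 = 0 ∨ i.1 = n - 1 then Real.exp (θ * h) else 2 * Real.cosh (θ * h))
         else if i.1 + 1 = j.1 ∨ j.1 + 1 = i.1 then -1
         else 0) := by
  have hs : 0 < Real.sinh (θ * h) := Real.sinh_pos_iff.2 (mul_pos hθ hh)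
  have hK' : ∀ i j : Fin n, K i j = σ ^ 2 / (2 * θ) * ouKernel (θ * h) i j := by
    intro i j
    have h1 : ((i.1 + 1 : ℝ) * h) - ((j.1 + 1 : ℝ) * h) = h * ((i.1 : ℝ) - j.1) := by ring
    rw [hK, h1, abs_mul, abs_of_pos hh, ouKernel]
    congr 2; ring
  let B : Matrix (Fin n) (Fin n) ℝ :=
    Matrix.of fun i j => θ / (σ ^ 2 * Real.sinh (θ * h)) * ouTri (θ * h) n i j
  have hBK : B * K = 1 := by
    ext i j
    have h1 : (B * K) i j = 1 / (2 * Real.sinh (θ * h)) *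
        ∑ k : Fin n, ouTri (θ * h) n i k * ouKernel (θ * h) k j := by
      rw [Matrix.mul_apply, Finset.mul_sum]
      refine Finset.sum_congr rfl fun k _ => ?_
      simp only [B, Matrix.of_apply, hK']
      field_simp
    rw [h1, Fin.sum_univ_eq_sum_range (fun k => ouTri (θ * h) n i k * ouKernel (θ * h) k j) n,
      sum_ouTri_mul_ouKernel _ (by omega) i.2 j.2, Matrix.one_apply]
    simp only [Fin.ext_iff]
    split_ifs
    · field_simp
    · ring
  refine ⟨Matrix.isUnit_det_of_left_inverse hBK, fun i j => ?_⟩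
  rw [Matrix.inv_eq_left_inv hBK]
  simp only [B, Matrix.of_apply, ouTri, Fin.ext_iff]
end

section
/- Let γ ∈ (0, π) and define p(x) = sin(γx) and q(x) = sin(γ(1−x)). Then p and q satisfy the MCF conditions on the open interval (0,1); that is, for all x, y ∈ (0,1): sin(γx)·sin(γ(1−y)) − sin(γy)·sin(γ(1−x)) < 0 whenever x < y, and sin(γx)·sin(γ(1−y)) > 0. (This is the Dirichlet-boundary Green's function case with ν = −γ² ∈ (−π², 0).) -/
/-- For `γ ∈ (0, π)`, the functions `p x = sin (γ x)` and
`q x = sin (γ (1 - x))` satisfy the MCF conditions on `(0, 1)`. -/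
theorem stmt9 (γ : ℝ) (hγ0 : 0 < γ) (hγπ : γ < Real.pi) :
    (∀ x y : ℝ, x ∈ Set.Ioo (0 : ℝ) 1 → y ∈ Set.Ioo (0 : ℝ) 1 → x < y →
      Real.sin (γ * x) * Real.sin (γ * (1 - y)) -
        Real.sin (γ * y) * Real.sin (γ * (1 - x)) < 0) ∧
    (∀ x y : ℝ, x ∈ Set.Ioo (0 : ℝ) 1 → y ∈ Set.Ioo (0 : ℝ) 1 →
      Real.sin (γ * x) * Real.sin (γ * (1 - y)) > 0) := by
  have h_pos : ∀ t : ℝ, 0 < t → t < 1 → 0 < Real.sin (γ * t) := fun t h0 h1 =>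
    Real.sin_pos_of_pos_of_lt_pi (by positivity) (by nlinarith)
  refine ⟨fun x y hx hy hxy => ?_, fun x y hx hy =>
    mul_pos (h_pos x hx.1 hx.2) (h_pos (1 - y) (by linarith [hy.2]) (by linarith [hy.1]))⟩
  -- By the subtraction formula the `cos γ` terms cancel, leaving a product of positive sines.
  have h_id : Real.sin (γ * x) * Real.sin (γ * (1 - y)) -
      Real.sin (γ * y) * Real.sin (γ * (1 - x)) =
      -(Real.sin γ * Real.sin (γ * (y - x))) := by
    simp only [mul_sub, mul_one, Real.sin_sub]
    ring
  rw [h_id, neg_lt_zero]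
  exact mul_pos (Real.sin_pos_of_pos_of_lt_pi hγ0 hγπ)
    (h_pos (y - x) (by linarith) (by linarith [hx.1, hy.2]))
end

section
/- Let γ ∈ (0, π/2) and define p(x) = sin(γx) and q(x) = cos(γ(1−x)). Then p and q satisfy the MCF conditions on the open interval (0,1); that is, for all x, y ∈ (0,1): sin(γx)·cos(γ(1−y)) − sin(γy)·cos(γ(1−x)) < 0 whenever x < y, and sin(γx)·cos(γ(1−y)) > 0. (This is the Cauchy-boundary Green's function case with ν = −γ² ∈ (−π²/4, 0).) -/
/-! The Wronskian-type difference collapses, by the addition formulas, to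
`-cos γ * sin (γ (y - x))`, which is negative because `γ` and `γ (y - x)` lie in `(0, π/2)`.
The positivity claim holds since both arguments lie in `(0, π/2)`. -/

/-- For `γ ∈ (0, π/2)`, the functions `p x = sin (γ x)` and
`q x = cos (γ (1 - x))` satisfy the MCF conditions on `(0, 1)` (Cauchy boundary case). -/
theorem stmt12 (γ : ℝ) (hγ0 : 0 < γ) (hγ : γ < Real.pi / 2) :
    (∀ x y : ℝ, x ∈ Set.Ioo (0 : ℝ) 1 → y ∈ Set.Ioo (0 : ℝ) 1 → x < y →
      Real.sin (γ * x) * Real.cos (γ * (1 - y)) -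
        Real.sin (γ * y) * Real.cos (γ * (1 - x)) < 0) ∧
    (∀ x y : ℝ, x ∈ Set.Ioo (0 : ℝ) 1 → y ∈ Set.Ioo (0 : ℝ) 1 →
      Real.sin (γ * x) * Real.cos (γ * (1 - y)) > 0) := by
  have hpi := Real.pi_pos
  constructor
  · rintro x y ⟨hx0, hx1⟩ ⟨hy0, hy1⟩ hxy
    have key : Real.sin (γ * x) * Real.cos (γ * (1 - y)) -
        Real.sin (γ * y) * Real.cos (γ * (1 - x)) =
        -(Real.cos γ * Real.sin (γ * y - γ * x)) := by
      rw [mul_sub, mul_sub, mul_one, Real.cos_sub, Real.cos_sub, Real.sin_sub]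
      ring
    have hc : 0 < Real.cos γ := Real.cos_pos_of_mem_Ioo ⟨by linarith, hγ⟩
    have hs : 0 < Real.sin (γ * y - γ * x) := by
      apply Real.sin_pos_of_pos_of_lt_pi <;> nlinarith
    rw [key]
    exact neg_neg_of_pos (mul_pos hc hs)
  · rintro x y ⟨hx0, hx1⟩ ⟨hy0, hy1⟩
    apply mul_pos
    · apply Real.sin_pos_of_pos_of_lt_pi <;> nlinarith
    · apply Real.cos_pos_of_mem_Ioo
      constructor <;> nlinarith
end

section
/- Let γ > 0 and define p(x) = cosh(γx) and q(x) = cosh(γ(1−x)). Then p and q satisfy the MCF conditions on the open interval (0,1); that is, for all x, y ∈ (0,1): cosh(γx)·cosh(γ(1−y)) − cosh(γy)·cosh(γ(1−x)) < 0 whenever x < y, and cosh(γx)·cosh(γ(1−y)) > 0. (This is the Neumann-boundary Green's function case with ν = γ² > 0.) -/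
/-- For `γ > 0`, the functions `p x = cosh (γ x)` and
`q x = cosh (γ (1 - x))` satisfy the MCF conditions on `(0, 1)` (Neumann boundary case). -/
theorem stmt14 (γ : ℝ) (hγ : 0 < γ) :
    (∀ x y : ℝ, x ∈ Set.Ioo (0 : ℝ) 1 → y ∈ Set.Ioo (0 : ℝ) 1 → x < y →
      Real.cosh (γ * x) * Real.cosh (γ * (1 - y)) -
        Real.cosh (γ * y) * Real.cosh (γ * (1 - x)) < 0) ∧
    (∀ x y : ℝ, x ∈ Set.Ioo (0 : ℝ) 1 → y ∈ Set.Ioo (0 : ℝ) 1 →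
      Real.cosh (γ * x) * Real.cosh (γ * (1 - y)) > 0) := by
  -- On `(0, 1)` the positive function `p` is strictly increasing and `q` strictly decreasing.
  refine ⟨fun x y hx hy hxy => ?_, fun x y _ _ => by positivity⟩
  have hp : Real.cosh (γ * x) < Real.cosh (γ * y) := by
    rw [Real.cosh_lt_cosh, abs_of_pos (mul_pos hγ hx.1), abs_of_pos (mul_pos hγ hy.1)]
    gcongr
  have hq : Real.cosh (γ * (1 - y)) < Real.cosh (γ * (1 - x)) := by
    rw [Real.cosh_lt_cosh, abs_of_pos (mul_pos hγ (sub_pos.2 hy.2)),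
      abs_of_pos (mul_pos hγ (sub_pos.2 hx.2))]
    gcongr
  exact sub_neg.2 (mul_lt_mul'' hp hq (Real.cosh_pos _).le (Real.cosh_pos _).le)
end

section
/- Let n ≥ 3, γ ∈ (0, π), η > 0, h > 0, and let x_i = x_1 + (i−1)h for i = 1, ..., n with 0 < x_1 and x_n < 1. Define g(x,y) = η²·sin(γ·min(x,y))·sin(γ·(1 − max(x,y))) and let G be the n×n matrix with entries G_{ij} = g(x_i, x_j). Then G is invertible and G⁻¹ = η⁻²·a·T, where a = 1/(sin(γ)·sin(γh)) and T is the tridiagonal matrix with T_{11} = sin(γ(x_1 + h))/sin(γx_1), T_{ii} = 2·cos(γh) for 2 ≤ i ≤ n−1, T_{nn} = sin(γ(1 − x_n + h))/sin(γ(1 − x_n)), T_{i,i+1} = T_{i+1,i} = −1 for 1 ≤ i ≤ n−1, and T_{ij} = 0 whenever |i − j| ≥ 2. -/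
/-!
Write `u k = sin (γ x_k)` and `v k = sin (γ (1 - x_k))`, so that
`G i j = η² u (min i j) v (max i j)`. Both sequences solve the recurrence
`w (k + 2) = 2 cos (γ h) w (k + 1) - w k`, hence the interior rows of `T` annihilate every column of
`G` away from the diagonal, and the quotients in the corner entries of `T` are chosen so that the
first and last rows do the same. On the diagonal, what remains is the discrete Wronskian
`u (k + 1) v k - u k v (k + 1)`, which equals `sin γ sin (γ h)` by the addition formulas
(`wronskian_sin`). So the claimed matrix is a left inverse of `G`; `sum_tri_mul_green` carries this
out for general sequences `u`, `v`.
-/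

/-- The tridiagonal matrix with corner entries `p`, `q`, inner diagonal entries `d` and off-diagonal
entries `-1`, indexed by all natural numbers; only indices below `n` are meaningful. -/
def tri (n : ℕ) (p q d : ℝ) (i j : ℕ) : ℝ :=
  if i = j then (if i = 0 then p else if i = n - 1 then q else d)
  else if i + 1 = j ∨ j + 1 = i then -1 else 0

/-- The semiseparable kernel `u (min k j) * v (max k j)`. -/
def green (u v : ℕ → ℝ) (k j : ℕ) : ℝ := if k ≤ j then u k * v j else u j * v k

/-- Discrete Green's identity: if `u` and `v` solve the three-term recurrence with coefficient `d`
and have constant Wronskian `W`, then the tridiagonal operator with matching boundary entries maps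
the kernel of `u` and `v` to `W` times the identity. -/
theorem sum_tri_mul_green (n : ℕ) (hn : 3 ≤ n) (u v : ℕ → ℝ) (d W : ℝ)
    (hu : ∀ k, u (k + 2) = d * u (k + 1) - u k)
    (hv : ∀ k, v (k + 2) = d * v (k + 1) - v k)
    (hW : ∀ k, u (k + 1) * v k - u k * v (k + 1) = W)
    (hu0 : u 0 ≠ 0) (hvn : v (n - 1) ≠ 0) (i j : ℕ) (hi : i < n) (hj : j < n) :
    ∑ k ∈ Finset.range n, tri n (u 1 / u 0) (v (n - 2) / v (n - 1)) d i k * green u v k j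
      = if i = j then W else 0 := by
  obtain ⟨N, rfl⟩ : ∃ N, n = N + 2 := ⟨n - 2, by omega⟩
  simp only [Nat.add_sub_cancel, show N + 2 - 1 = N + 1 by omega] at *
  by_cases h0 : i = 0
  · subst h0
    rw [← Finset.sum_subset (s₁ := {0, 1})]
    · rw [Finset.sum_pair (by norm_num)]
      have := hW 0
      rcases Nat.eq_zero_or_pos j with rfl | hj0
      · simp [tri, green]
        field_simp
        linarith
      · have h1 : 1 ≤ j := hj0
        simp [tri, green, h1, hj0.ne]
        field_simp
        ring
    · intro k hk
      simp at hk ⊢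
      omega
    · intro k _ hk
      simp at hk
      have : tri (N + 2) (u 1 / u 0) (v N / v (N + 1)) d 0 k = 0 := by
        unfold tri
        rw [if_neg (by omega), if_neg (by omega)]
      rw [this, zero_mul]
  by_cases hl : i = N + 1
  · subst hl
    rw [← Finset.sum_subset (s₁ := {N, N + 1})]
    · rw [Finset.sum_pair (by omega)]
      have := hW N
      rcases (by omega : j = N + 1 ∨ j ≤ N) with rfl | hj0
      · simp [tri, green]
        field_simp
        linarith
      · have e : green u v N j = u j * v N := by
          unfold green
          split_ifs
          · rw [show j = N by omega]
          · rfl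
        have e' : green u v (N + 1) j = u j * v (N + 1) := by
          unfold green
          rw [if_neg (by omega)]
        rw [e, e', if_neg (by omega)]
        simp [tri]
        field_simp
        ring
    · intro k hk
      simp at hk ⊢
      omega
    · intro k hk' hk
      simp at hk hk'
      have : tri (N + 2) (u 1 / u 0) (v N / v (N + 1)) d (N + 1) k = 0 := by
        unfold tri
        rw [if_neg (by omega), if_neg (by omega)]
      rw [this, zero_mul]
  obtain ⟨m, rfl⟩ : ∃ m, i = m + 1 := ⟨i - 1, by omega⟩
  rw [← Finset.sum_subset (s₁ := {m, m + 1, m + 2})]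
  · rw [Finset.sum_insert (by simp), Finset.sum_pair (by omega)]
    have e1 : tri (N + 2) (u 1 / u 0) (v N / v (N + 1)) d (m + 1) m = -1 := by
      simp [tri]
    have e2 : tri (N + 2) (u 1 / u 0) (v N / v (N + 1)) d (m + 1) (m + 1) = d := by
      unfold tri
      rw [if_pos rfl, if_neg h0, if_neg (by omega)]
    have e3 : tri (N + 2) (u 1 / u 0) (v N / v (N + 1)) d (m + 1) (m + 2) = -1 := by
      simp [tri]
    rw [e1, e2, e3]
    have h1 := hu m
    have h2 := hv m
    rcases lt_trichotomy j (m + 1) with hlt | rfl | hgt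
    · have e : green u v m j = u j * v m := by
        unfold green
        split_ifs
        · rw [show j = m by omega]
        · rfl
      rw [e, if_neg (by omega)]
      unfold green
      rw [if_neg (by omega), if_neg (by omega), h2]
      ring
    · unfold green
      rw [if_pos (by omega), if_pos (by omega), if_neg (by omega), if_pos rfl, ← hW (m + 1), h1]
      ring
    · unfold green
      rw [if_pos (by omega), if_pos (by omega), if_pos (by omega), if_neg (by omega), h1]
      ring
  · intro k hk
    simp at hk ⊢
    omega
  · intro k _ hk
    simp at hk
    have : tri (N + 2) (u 1 / u 0) (v N / v (N + 1)) d (m + 1) k = 0 := by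
      unfold tri
      rw [if_neg (by omega), if_neg (by omega)]
    rw [this, zero_mul]

theorem sin_recurrence (a b : ℝ) :
    Real.sin (a + b) = 2 * Real.cos b * Real.sin a - Real.sin (a - b) := by
  rw [Real.sin_add, Real.sin_sub]
  ring

theorem wronskian_sin (g a b : ℝ) :
    Real.sin (a + b) * Real.sin (g - a) - Real.sin a * Real.sin (g - (a + b))
      = Real.sin g * Real.sin b := by
  simp only [Real.sin_add, Real.sin_sub, Real.cos_add]
  linear_combination (Real.sin g * Real.sin b) * Real.sin_sq_add_cos_sq a


/-- Dirichlet Green's-function covariance with `ν = -γ² ∈ (-π², 0)`: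
`g (x, y) = η² sin (γ min (x, y)) sin (γ (1 - max (x, y)))` at equally spaced points
`x_i = x₁ + (i - 1) h ∈ (0, 1)`.  Then `G` is invertible and
`G⁻¹ = η⁻² a T` with `a = 1 / (sin γ · sin (γ h))` and `T` the explicit tridiagonal matrix.
(Matrix index `i : Fin n` ↔ paper index `i + 1`, so `x_i = x₁ + i h` for `i : Fin n`.) -/
theorem stmt15 (n : ℕ) (hn : 3 ≤ n) (γ η h x₁ : ℝ)
    (hγ0 : 0 < γ) (hγπ : γ < Real.pi) (hη : 0 < η) (hh : 0 < h)
    (hx₁ : 0 < x₁) (hxn : x₁ + (n - 1 : ℝ) * h < 1)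
    (G : Matrix (Fin n) (Fin n) ℝ)
    (hG : ∀ i j : Fin n, G i j =
      η ^ 2 * Real.sin (γ * min (x₁ + i.1 * h) (x₁ + j.1 * h)) *
        Real.sin (γ * (1 - max (x₁ + i.1 * h) (x₁ + j.1 * h)))) :
    IsUnit G.det ∧ ∀ i j : Fin n,
      G⁻¹ i j = (η ^ 2)⁻¹ * (1 / (Real.sin γ * Real.sin (γ * h))) *
        (if i = j then
          (if i.1 = 0 then Real.sin (γ * (x₁ + h)) / Real.sin (γ * x₁)
           else if i.1 = n - 1 then
             Real.sin (γ * (1 - (x₁ + (n - 1 : ℝ) * h) + h)) /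
               Real.sin (γ * (1 - (x₁ + (n - 1 : ℝ) * h)))
           else 2 * Real.cos (γ * h))
         else if i.1 + 1 = j.1 ∨ j.1 + 1 = i.1 then -1
         else 0) := by
  have hn1 : (2 : ℝ) ≤ (n : ℝ) - 1 := by
    have : (3 : ℝ) ≤ n := by exact_mod_cast hn
    linarith
  have hpos : ∀ t : ℝ, 0 < t → t < 1 → 0 < Real.sin (γ * t) := fun t h0 h1 =>
    Real.sin_pos_of_pos_of_lt_pi (by positivity) (by nlinarith)
  have hsγ : Real.sin γ ≠ 0 := (Real.sin_pos_of_pos_of_lt_pi hγ0 hγπ).ne'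
  have hsh : Real.sin (γ * h) ≠ 0 := (hpos h hh (by nlinarith)).ne'
  let u : ℕ → ℝ := fun k => Real.sin (γ * (x₁ + k * h))
  let v : ℕ → ℝ := fun k => Real.sin (γ * (1 - (x₁ + k * h)))
  have hu : ∀ k, u (k + 2) = 2 * Real.cos (γ * h) * u (k + 1) - u k := by
    intro k
    have := sin_recurrence (γ * (x₁ + (k + 1 : ℕ) * h)) (γ * h)
    simp only [u]
    convert this using 3 <;> push_cast <;> ring_nf
  have hv : ∀ k, v (k + 2) = 2 * Real.cos (γ * h) * v (k + 1) - v k := by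
    intro k
    have := sin_recurrence (γ * (1 - (x₁ + (k + 1 : ℕ) * h))) (γ * h)
    have e1 : γ * (1 - (x₁ + (k + 1 : ℕ) * h)) + γ * h = γ * (1 - (x₁ + k * h)) := by
      push_cast; ring
    have e2 : γ * (1 - (x₁ + (k + 1 : ℕ) * h)) - γ * h = γ * (1 - (x₁ + (k + 2 : ℕ) * h)) := by
      push_cast; ring
    rw [e1, e2] at this
    simp only [v]
    linarith
  have hW : ∀ k, u (k + 1) * v k - u k * v (k + 1) = Real.sin γ * Real.sin (γ * h) := by
    intro k
    rw [← wronskian_sin γ (γ * (x₁ + k * h)) (γ * h)]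
    have e1 : γ * (x₁ + (k + 1 : ℕ) * h) = γ * (x₁ + k * h) + γ * h := by push_cast; ring
    simp only [u, v, mul_sub γ 1, mul_one, e1]
  have hu0 : u 0 ≠ 0 := by
    have := (hpos x₁ hx₁ (by nlinarith)).ne'
    simpa [u] using this
  have hcast : ((n - 1 : ℕ) : ℝ) = (n : ℝ) - 1 := by
    rw [Nat.cast_sub (by omega)]; simp
  have hcast2 : ((n - 2 : ℕ) : ℝ) = (n : ℝ) - 2 := by
    rw [Nat.cast_sub (by omega)]; simp
  have hvn : v (n - 1) ≠ 0 := by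
    simp only [v, hcast]
    exact (hpos _ (by linarith) (by nlinarith)).ne'
  have hGg : ∀ i j : Fin n, G i j = η ^ 2 * green u v i j := by
    intro i j
    rw [hG]
    unfold green
    split_ifs with hij
    · have : x₁ + (i.1 : ℝ) * h ≤ x₁ + j.1 * h := by gcongr
      rw [min_eq_left this, max_eq_right this, mul_assoc]
    · have : x₁ + (j.1 : ℝ) * h ≤ x₁ + i.1 * h := by
        have := (not_le.mp hij).le
        gcongr
      rw [min_eq_right this, max_eq_left this, mul_assoc]
  let M : Matrix (Fin n) (Fin n) ℝ := fun i j =>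
    (η ^ 2)⁻¹ * (1 / (Real.sin γ * Real.sin (γ * h))) *
      tri n (u 1 / u 0) (v (n - 2) / v (n - 1)) (2 * Real.cos (γ * h)) i j
  have hMG : M * G = 1 := by
    ext i j
    have key := sum_tri_mul_green n hn u v _ _ hu hv hW hu0 hvn i j i.2 j.2
    rw [Finset.sum_range] at key
    have : ∀ k, M i k * G k j = (1 / (Real.sin γ * Real.sin (γ * h))) *
        (tri n (u 1 / u 0) (v (n - 2) / v (n - 1)) (2 * Real.cos (γ * h)) i k
          * green u v k j) := by
      intro k
      rw [hGg]
      simp only [M]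
      field_simp
    rw [Matrix.mul_apply, Finset.sum_congr rfl (fun k _ => this k), ← Finset.mul_sum, key,
      Matrix.one_apply]
    simp only [Fin.ext_iff]
    split_ifs
    · field_simp
    · simp
  refine ⟨Matrix.isUnit_det_of_left_inverse hMG, fun i j => ?_⟩
  rw [Matrix.inv_eq_left_inv hMG]
  have e0 : u 1 / u 0 = Real.sin (γ * (x₁ + h)) / Real.sin (γ * x₁) := by simp [u]
  have e1 : v (n - 2) / v (n - 1) = Real.sin (γ * (1 - (x₁ + (n - 1 : ℝ) * h) + h)) /
      Real.sin (γ * (1 - (x₁ + (n - 1 : ℝ) * h))) := by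
    simp only [v, hcast, hcast2]
    congr 3
    ring
  simp only [M, tri, e0, e1, Fin.ext_iff]
end

section
/- Let n ≥ 3, η > 0, h > 0, and let x_i = x_1 + (i−1)h for i = 1, ..., n with 0 < x_1 and x_n < 1. Define g(x,y) = η²·min(x,y)·(1 − max(x,y)) and let G be the n×n matrix with entries G_{ij} = g(x_i, x_j). Then G is invertible and G⁻¹ = η⁻²·(1/h)·T, where T is the tridiagonal matrix with T_{11} = 1 + h/x_1, T_{ii} = 2 for 2 ≤ i ≤ n−1, T_{nn} = 1 + h/(1 − x_n), T_{i,i+1} = T_{i+1,i} = −1 for 1 ≤ i ≤ n−1, and T_{ij} = 0 whenever |i − j| ≥ 2. -/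
/-!
The tridiagonal matrix takes negative second differences along the nodes, and each column of `G` is a
discrete Green's function. As a function of the row node, `g (·, y)` is affine on either side of `y`,
with slopes `η² (1 - y)` and `-η² y`. Its negative second difference at the nodes therefore vanishes
away from `y` and equals `η² h` at `y`, the slope dropping by `η²` there. The corner entries
`1 + h / x₁` and `1 + h / (1 - xₙ)` play the same role at the end nodes, since `g (·, y)` vanishes
linearly at `0` and `1`. Hence the claimed matrix is a left inverse of `G`
(`tridiag_sum` evaluates the rows of the product), which gives both invertibility and the formula.
-/

/-- A row of a tridiagonal matrix with off-diagonal entries `-1`, applied to a vector `F`. -/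
lemma tridiag_sum (n : ℕ) (i : Fin n) (d : ℝ) (F : ℕ → ℝ) :
    ∑ k : Fin n, (if i = k then d else if i.1 + 1 = k.1 ∨ k.1 + 1 = i.1 then -1 else 0) * F k.1 =
      d * F i.1 - (if i.1 + 1 < n then F (i.1 + 1) else 0)
        - (if 0 < i.1 then F (i.1 - 1) else 0) := by
  have hi := i.2
  have key : ∀ k : ℕ, (if i.1 = k then d else if i.1 + 1 = k ∨ k + 1 = i.1 then -1 else 0) * F k =
      (if i.1 = k then d * F k else 0) - (if i.1 + 1 = k then F k else 0)
        - (if i.1 - 1 = k then (if 0 < i.1 then F k else 0) else 0) := by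
    intro k
    split_ifs <;> first | omega | ring
  simp only [Fin.ext_iff]
  rw [Fin.sum_univ_eq_sum_range
    (fun k => (if i.1 = k then d else if i.1 + 1 = k ∨ k + 1 = i.1 then -1 else 0) * F k) n]
  simp only [key, Finset.sum_sub_distrib, Finset.sum_ite_eq, Finset.mem_range]
  rw [if_pos hi, if_pos (show i.1 - 1 < n by omega)]

/-- Dirichlet Green's-function covariance with `ν = 0`:
`g (x, y) = η² min (x, y) (1 - max (x, y))` at equally spaced points
`x_i = x₁ + (i - 1) h ∈ (0, 1)`.  Then `G` is invertible and `G⁻¹ = η⁻² (1 / h) T`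
with `T` the explicit tridiagonal matrix.
(Matrix index `i : Fin n` ↔ paper index `i + 1`, so `x_i = x₁ + i h` for `i : Fin n`.) -/
theorem stmt16 (n : ℕ) (hn : 3 ≤ n) (η h x₁ : ℝ)
    (hη : 0 < η) (hh : 0 < h) (hx₁ : 0 < x₁) (hxn : x₁ + (n - 1 : ℝ) * h < 1)
    (G : Matrix (Fin n) (Fin n) ℝ)
    (hG : ∀ i j : Fin n, G i j =
      η ^ 2 * min (x₁ + i.1 * h) (x₁ + j.1 * h) *
        (1 - max (x₁ + i.1 * h) (x₁ + j.1 * h))) :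
    IsUnit G.det ∧ ∀ i j : Fin n,
      G⁻¹ i j = (η ^ 2)⁻¹ * (1 / h) *
        (if i = j then
          (if i.1 = 0 then 1 + h / x₁
           else if i.1 = n - 1 then 1 + h / (1 - (x₁ + (n - 1 : ℝ) * h))
           else 2)
         else if i.1 + 1 = j.1 ∨ j.1 + 1 = i.1 then -1
         else 0) := by
  have hmono : ∀ k l : ℕ, k ≤ l → x₁ + (k : ℝ) * h ≤ x₁ + (l : ℝ) * h := by
    intro k l hkl
    gcongr
  have hle : ∀ k l : ℕ, k ≤ l → η ^ 2 * min (x₁ + k * h) (x₁ + l * h) *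
      (1 - max (x₁ + k * h) (x₁ + l * h)) = η ^ 2 * (x₁ + k * h) * (1 - (x₁ + l * h)) := by
    intro k l hkl
    rw [min_eq_left (hmono k l hkl), max_eq_right (hmono k l hkl)]
  have hge : ∀ k l : ℕ, l ≤ k → η ^ 2 * min (x₁ + k * h) (x₁ + l * h) *
      (1 - max (x₁ + k * h) (x₁ + l * h)) = η ^ 2 * (x₁ + l * h) * (1 - (x₁ + k * h)) := by
    intro k l hkl
    rw [min_eq_right (hmono l k hkl), max_eq_left (hmono l k hkl)]
  have hxn' : 1 - (x₁ + ((n : ℝ) - 1) * h) ≠ 0 := by linarith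
  let T : Matrix (Fin n) (Fin n) ℝ := fun i j => (η ^ 2)⁻¹ * (1 / h) *
        (if i = j then
          (if i.1 = 0 then 1 + h / x₁
           else if i.1 = n - 1 then 1 + h / (1 - (x₁ + (n - 1 : ℝ) * h))
           else 2)
         else if i.1 + 1 = j.1 ∨ j.1 + 1 = i.1 then -1
         else 0)
  have hT : T * G = 1 := by
    ext i j
    have hi := i.2
    have hj := j.2
    rw [Matrix.mul_apply]
    simp only [T, hG, mul_assoc ((η ^ 2)⁻¹ * (1 / h))]
    rw [← Finset.mul_sum, tridiag_sum n i _ (fun k => η ^ 2 * min (x₁ + k * h) (x₁ + j.1 * h) *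
        (1 - max (x₁ + k * h) (x₁ + j.1 * h))), Matrix.one_apply]
    simp only [Fin.ext_iff]
    generalize i.1 = a at *
    generalize j.1 = b at *
    by_cases h0 : a = 0
    · subst h0
      rw [if_pos rfl, if_pos (by omega), if_neg (by omega), hle 0 b (by omega)]
      by_cases hb : 0 = b
      · subst hb
        rw [hge (0 + 1) 0 (by omega), if_pos rfl]
        push_cast
        field_simp
        ring
      · rw [hle (0 + 1) b (by omega), if_neg hb]
        push_cast
        field_simp
        ring
    · obtain ⟨c, rfl⟩ : ∃ c, a = c + 1 := ⟨a - 1, by omega⟩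
      rw [if_neg h0, if_pos (Nat.succ_pos c), Nat.add_sub_cancel]
      by_cases hl : c + 1 = n - 1
      · obtain rfl : n = c + 2 := by omega
        rw [if_pos hl, if_neg (by omega), hge (c + 1) b (by omega)]
        push_cast at hxn' ⊢
        rw [show (c : ℝ) + 2 - 1 = c + 1 by ring] at hxn' ⊢
        -- The gap `D` between the last node and `1` replaces `x₁` as the free variable, so that
        -- the corner denominator is an atom.
        obtain ⟨D, hD⟩ : ∃ D, D = 1 - (x₁ + ((c : ℝ) + 1) * h) := ⟨_, rfl⟩
        have hx : x₁ = 1 - D - ((c : ℝ) + 1) * h := by linarith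
        rw [← hD] at hxn' ⊢
        by_cases hb : c + 1 = b
        · subst hb
          rw [hle c (c + 1) (by omega), if_pos rfl, hx]
          push_cast
          field_simp
          ring
        · rw [hge c b (by omega), if_neg hb, hx]
          field_simp
          ring
      · rw [if_neg hl, if_pos (by omega)]
        rcases lt_trichotomy (c + 1) b with hb | hb | hb
        · rw [hle (c + 1) b (by omega), hle (c + 1 + 1) b (by omega), hle c b (by omega),
            if_neg (by omega)]
          push_cast
          ring
        · subst hb
          rw [hle (c + 1) (c + 1) le_rfl, hge (c + 1 + 1) (c + 1) (by omega),
            hle c (c + 1) (by omega), if_pos rfl]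
          push_cast
          field_simp
          ring
        · rw [hge (c + 1) b (by omega), hge (c + 1 + 1) b (by omega), hge c b (by omega),
            if_neg (by omega)]
          push_cast
          ring
  refine ⟨(Matrix.isUnit_iff_isUnit_det G).mp (IsUnit.of_mul_eq_one_right T hT), fun i j => ?_⟩
  rw [Matrix.inv_eq_left_inv hT]
end

section
/- Let n ≥ 3, γ > 0, η > 0, h > 0, and let x_i = x_1 + (i−1)h for i = 1, ..., n with 0 < x_1 and x_n < 1. Define g(x,y) = η²·sinh(γ·min(x,y))·sinh(γ·(1 − max(x,y))) and let G be the n×n matrix with entries G_{ij} = g(x_i, x_j). Then G is invertible and G⁻¹ = η⁻²·a·T, where a = 1/(sinh(γ)·sinh(γh)) and T is the tridiagonal matrix with T_{11} = sinh(γ(x_1 + h))/sinh(γx_1), T_{ii} = 2·cosh(γh) for 2 ≤ i ≤ n−1, T_{nn} = sinh(γ(1 − x_n + h))/sinh(γ(1 − x_n)), T_{i,i+1} = T_{i+1,i} = −1 for 1 ≤ i ≤ n−1, and T_{ij} = 0 whenever |i − j| ≥ 2. -/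
/-!
The matrix `G` is a one-pair (semiseparable) matrix: with `p k = sinh (γ x_k)` and
`q k = sinh (γ (1 - x_k))`, its entries are `η² p (min i j) q (max i j)`. On the uniform grid both
`p` and `q` solve the three-term recurrence `u (k + 2) + u k = 2 cosh (γ h) u (k + 1)`, so each row
of the tridiagonal matrix `T` annihilates every column of `G` away from the diagonal; the corner
entries of `T` are exactly those for which this also holds in the first and last rows. On the
diagonal what remains is the discrete Wronskian `p (k + 1) q k - p k q (k + 1)`, which the addition
formulas evaluate to the constant `sinh γ sinh (γ h)`. Hence `η⁻² a T` is a left inverse of `G`.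
-/

/-- A row of a tridiagonal matrix with off-diagonal entries `-1`, applied to a vector. -/
lemma tridiag_row_sum (n : ℕ) (i : Fin n) (d : ℝ) (f : ℕ → ℝ) :
    ∑ k : Fin n, (if i = k then d else if i.1 + 1 = k.1 ∨ k.1 + 1 = i.1 then -1 else 0) * f k.1
      = d * f i.1 - (if i.1 + 1 < n then f (i.1 + 1) else 0)
        - (if 0 < i.1 then f (i.1 - 1) else 0) := by
  obtain ⟨i, hi⟩ := i
  -- The inner test `0 < i` removes the spurious term from the truncated `0 - 1 = 0`.
  let F : ℕ → ℝ := fun k => (if k = i then d * f k else 0) - (if k = i + 1 then f k else 0)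
    - (if k = i - 1 then (if 0 < i then f k else 0) else 0)
  have key : ∀ k : Fin n,
      (if (⟨i, hi⟩ : Fin n) = k then d else if i + 1 = k.1 ∨ k.1 + 1 = i then -1 else 0) * f k.1
      = F k.1 := by
    rintro ⟨k, hk⟩
    simp only [Fin.mk.injEq, F]
    split_ifs <;> first | omega | (subst_vars; ring)
  rw [Finset.sum_congr rfl fun k _ => key k, Fin.sum_univ_eq_sum_range F n]
  have h1 : i - 1 < n := by omega
  simp [F, Finset.sum_sub_distrib, Finset.sum_ite_eq', hi, h1]

/-- The tridiagonal matrix built from a three-term recurrence, applied to a column of the one-pair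
matrix `p (min k j) q (max k j)`, gives the Wronskian `S` on the diagonal and `0` off it. -/
lemma tridiag_mul_onePair (n : ℕ) (hn : 3 ≤ n) (p q : ℕ → ℝ) (c S d₀ d₁ : ℝ)
    (hp : ∀ k, p (k + 2) + p k = c * p (k + 1))
    (hq : ∀ k, q (k + 2) + q k = c * q (k + 1))
    (hW : ∀ k, p (k + 1) * q k - p k * q (k + 1) = S)
    (h₀ : d₀ * p 0 = p 1) (h₁ : d₁ * q (n - 1) = q (n - 2)) (i j : Fin n) :
    ∑ k : Fin n, (if i = k then
        (if i.1 = 0 then d₀ else if i.1 = n - 1 then d₁ else c)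
        else if i.1 + 1 = k.1 ∨ k.1 + 1 = i.1 then -1 else 0)
        * (p (min k.1 j.1) * q (max k.1 j.1)) = if i = j then S else 0 := by
  rw [tridiag_row_sum n i _ fun k => p (min k j.1) * q (max k j.1)]
  obtain ⟨i, hi⟩ := i
  obtain ⟨j, hj⟩ := j
  simp only [Fin.mk.injEq]
  obtain ⟨m, rfl⟩ : ∃ m, n = m + 2 := ⟨n - 2, by omega⟩
  simp only [Nat.add_sub_cancel, show m + 2 - 1 = m + 1 by omega] at h₁ ⊢
  rcases i with _ | i
  · rcases j with _ | j
    · simp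
      linear_combination q 0 * h₀ + hW 0
    · simp
      linear_combination q (j + 1) * h₀
  · by_cases hm : i = m
    · subst hm
      rcases (show j = i + 1 ∨ j ≤ i by omega) with rfl | hji
      · simp
        linear_combination p (i + 1) * h₁ + hW i
      · have e1 : min (i + 1) j = j := by omega
        have e2 : max (i + 1) j = i + 1 := by omega
        have e3 : i + 1 ≠ j := by omega
        simp [e1, e2, e3, hji]
        linear_combination p j * h₁
    · have e4 : i + 1 + 1 < m + 2 := by omega
      rcases lt_trichotomy (i + 1) j with hij | rfl | hij
      · have e1 : min (i + 1) j = i + 1 := by omega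
        have e2 : max (i + 1) j = j := by omega
        have e3 : i + 1 ≠ j := by omega
        have e5 : min (i + 1 + 1) j = i + 2 := by omega
        have e6 : max (i + 1 + 1) j = j := by omega
        have e7 : min i j = i := by omega
        have e8 : max i j = j := by omega
        simp only [e1, e2, e3, e5, e6, e7, e8, e4, hm, Nat.add_sub_cancel, if_true, if_false,
          Nat.succ_ne_zero, Nat.add_right_cancel_iff, Nat.succ_pos]
        linear_combination -q j * hp i
      · simp [e4, hm]
        linear_combination -q (i + 1) * hp i + hW (i + 1)
      · have e1 : min (i + 1) j = j := by omega
        have e2 : max (i + 1) j = i + 1 := by omega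
        have e3 : i + 1 ≠ j := by omega
        have e5 : min (i + 1 + 1) j = j := by omega
        have e6 : max (i + 1 + 1) j = i + 2 := by omega
        have e7 : min i j = j := by omega
        have e8 : max i j = i := by omega
        simp only [e1, e2, e3, e5, e6, e7, e8, e4, hm, Nat.add_sub_cancel, if_true, if_false,
          Nat.succ_ne_zero, Nat.add_right_cancel_iff, Nat.succ_pos]
        linear_combination -p j * hq i

lemma sinh_add_add_sinh_sub (u w : ℝ) :
    Real.sinh (u + w) + Real.sinh (u - w) = 2 * Real.cosh w * Real.sinh u := by
  rw [Real.sinh_add, Real.sinh_sub]; ring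

/-- The discrete Wronskian of `sinh u` and `sinh (g - u)` under a shift by `w` does not depend on
`u`. -/
lemma sinh_wronskian (g u w : ℝ) :
    Real.sinh (u + w) * Real.sinh (g - u) - Real.sinh u * Real.sinh (g - (u + w))
      = Real.sinh g * Real.sinh w := by
  simp only [Real.sinh_sub, Real.sinh_add, Real.cosh_add]
  linear_combination (Real.sinh g * Real.sinh w) * Real.cosh_sq_sub_sinh_sq u


/-- Dirichlet Green's-function covariance with `ν = γ² > 0`:
`g (x, y) = η² sinh (γ min (x, y)) sinh (γ (1 - max (x, y)))` at equally spaced points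
`x_i = x₁ + (i - 1) h ∈ (0, 1)`.  Then `G` is invertible and `G⁻¹ = η⁻² a T` with
`a = 1 / (sinh γ · sinh (γ h))` and `T` the explicit tridiagonal matrix.
(Matrix index `i : Fin n` ↔ paper index `i + 1`, so `x_i = x₁ + i h` for `i : Fin n`.) -/
theorem stmt17 (n : ℕ) (hn : 3 ≤ n) (γ η h x₁ : ℝ)
    (hγ : 0 < γ) (hη : 0 < η) (hh : 0 < h)
    (hx₁ : 0 < x₁) (hxn : x₁ + (n - 1 : ℝ) * h < 1)
    (G : Matrix (Fin n) (Fin n) ℝ)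
    (hG : ∀ i j : Fin n, G i j =
      η ^ 2 * Real.sinh (γ * min (x₁ + i.1 * h) (x₁ + j.1 * h)) *
        Real.sinh (γ * (1 - max (x₁ + i.1 * h) (x₁ + j.1 * h)))) :
    IsUnit G.det ∧ ∀ i j : Fin n,
      G⁻¹ i j = (η ^ 2)⁻¹ * (1 / (Real.sinh γ * Real.sinh (γ * h))) *
        (if i = j then
          (if i.1 = 0 then Real.sinh (γ * (x₁ + h)) / Real.sinh (γ * x₁)
           else if i.1 = n - 1 then
             Real.sinh (γ * (1 - (x₁ + (n - 1 : ℝ) * h) + h)) /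
               Real.sinh (γ * (1 - (x₁ + (n - 1 : ℝ) * h)))
           else 2 * Real.cosh (γ * h))
         else if i.1 + 1 = j.1 ∨ j.1 + 1 = i.1 then -1
         else 0) := by
  set p : ℕ → ℝ := fun k => Real.sinh (γ * (x₁ + k * h)) with hpdef
  set q : ℕ → ℝ := fun k => Real.sinh (γ * (1 - (x₁ + k * h))) with hqdef
  have hsγ : Real.sinh γ ≠ 0 := (Real.sinh_pos_iff.2 hγ).ne'
  have hsh : Real.sinh (γ * h) ≠ 0 := (Real.sinh_pos_iff.2 (mul_pos hγ hh)).ne'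
  have hs0 : Real.sinh (γ * x₁) ≠ 0 := (Real.sinh_pos_iff.2 (mul_pos hγ hx₁)).ne'
  have hs1 : Real.sinh (γ * (1 - (x₁ + (n - 1 : ℝ) * h))) ≠ 0 :=
    (Real.sinh_pos_iff.2 (mul_pos hγ (by linarith))).ne'
  have hmono : Monotone fun k : ℕ => x₁ + (k : ℝ) * h := fun a b hab => by
    have : (a : ℝ) ≤ b := by exact_mod_cast hab
    change x₁ + (a : ℝ) * h ≤ x₁ + (b : ℝ) * h
    gcongr
  have hG' : ∀ i j : Fin n, G i j = η ^ 2 * (p (min i.1 j.1) * q (max i.1 j.1)) := fun i j => by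
    have e1 := hmono.map_min (a := i.1) (b := j.1)
    have e2 := hmono.map_max (a := i.1) (b := j.1)
    rw [hG, ← e1, ← e2, mul_assoc]
  have hp : ∀ k, p (k + 2) + p k = 2 * Real.cosh (γ * h) * p (k + 1) := fun k => by
    have := sinh_add_add_sinh_sub (γ * (x₁ + (k + 1) * h)) (γ * h)
    simp only [hpdef]
    push_cast
    rw [← this]
    ring_nf
  have hq : ∀ k, q (k + 2) + q k = 2 * Real.cosh (γ * h) * q (k + 1) := fun k => by
    have := sinh_add_add_sinh_sub (γ * (1 - (x₁ + (k + 1) * h))) (γ * h)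
    simp only [hqdef]
    push_cast
    rw [← this, add_comm]
    ring_nf
  have hW : ∀ k, p (k + 1) * q k - p k * q (k + 1) = Real.sinh γ * Real.sinh (γ * h) :=
    fun k => by
      have := sinh_wronskian γ (γ * (x₁ + k * h)) (γ * h)
      simp only [hpdef, hqdef]
      push_cast
      rw [← this]
      ring_nf
  have hd₀ : Real.sinh (γ * (x₁ + h)) / Real.sinh (γ * x₁) * p 0 = p 1 := by
    simp [hpdef, hs0]
  have hd₁ : Real.sinh (γ * (1 - (x₁ + (n - 1 : ℝ) * h) + h)) /
      Real.sinh (γ * (1 - (x₁ + (n - 1 : ℝ) * h))) * q (n - 1) = q (n - 2) := by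
    simp only [hqdef]
    rw [Nat.cast_sub (by omega : 1 ≤ n), Nat.cast_sub (by omega : 2 ≤ n)]
    push_cast
    rw [div_mul_cancel₀ _ hs1]
    ring_nf
  have key := tridiag_mul_onePair n hn p q _ _ _ _ hp hq hW hd₀ hd₁
  have hinv : (Matrix.of fun i j : Fin n =>
      (η ^ 2)⁻¹ * (1 / (Real.sinh γ * Real.sinh (γ * h))) *
        (if i = j then
          (if i.1 = 0 then Real.sinh (γ * (x₁ + h)) / Real.sinh (γ * x₁)
           else if i.1 = n - 1 then
             Real.sinh (γ * (1 - (x₁ + (n - 1 : ℝ) * h) + h)) /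
               Real.sinh (γ * (1 - (x₁ + (n - 1 : ℝ) * h)))
           else 2 * Real.cosh (γ * h))
         else if i.1 + 1 = j.1 ∨ j.1 + 1 = i.1 then -1
         else 0)) * G = 1 := by
    ext i j
    rw [Matrix.mul_apply, Matrix.one_apply]
    have e : (if i = j then (1 : ℝ) else 0) = 1 / (Real.sinh γ * Real.sinh (γ * h)) *
        (if i = j then Real.sinh γ * Real.sinh (γ * h) else 0) := by
      split_ifs
      · field_simp
      · simp
    rw [e, ← key i j, Finset.mul_sum]
    refine Finset.sum_congr rfl fun k _ => ?_
    rw [hG', Matrix.of_apply]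
    have hη2 : (η ^ 2)⁻¹ * η ^ 2 = 1 := inv_mul_cancel₀ (by positivity)
    generalize (if i = k then _ else _ : ℝ) = t
    linear_combination (1 / (Real.sinh γ * Real.sinh (γ * h)) * t *
      (p (min k.1 j.1) * q (max k.1 j.1))) * hη2
  refine ⟨(Matrix.isUnit_iff_isUnit_det G).1 (IsUnit.of_mul_eq_one_right _ hinv), fun i j => ?_⟩
  rw [Matrix.inv_eq_left_inv hinv, Matrix.of_apply]
end

section
/- Let n ≥ 3, γ > 0, η > 0, h > 0, and let x_i = x_1 + (i−1)h for i = 1, ..., n with 0 < x_1 and x_n < 1. Define g(x,y) = η²·cosh(γ·min(x,y))·cosh(γ·(1 − max(x,y))) and let G be the n×n matrix with entries G_{ij} = g(x_i, x_j). Then G is invertible and G⁻¹ = η⁻²·a·T, where a = 1/(sinh(γ)·sinh(γh)) and T is the tridiagonal matrix with T_{11} = cosh(γ(x_1 + h))/cosh(γx_1), T_{ii} = 2·cosh(γh) for 2 ≤ i ≤ n−1, T_{nn} = cosh(γ(1 − x_n + h))/cosh(γ(1 − x_n)), T_{i,i+1} = T_{i+1,i} = −1 for 1 ≤ i ≤ n−1,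 and T_{ij} = 0 whenever |i − j| ≥ 2. -/
/-!
The matrix `G` is, up to the factor `η²`, the single-pair matrix `P (min i j) * Q (max i j)` with
`P k = cosh (γ x_k)` and `Q k = cosh (γ (1 - x_k))`. Both sequences satisfy the same three-term
recurrence `u (k - 1) + u (k + 1) = 2 cosh (γ h) u k`, and the two corner entries of `T` are chosen
so that `P` satisfies the one-sided recurrence at the left end and `Q` the one at the right end.
Row `i` of `T` therefore annihilates column `j` of the matrix off the diagonal, where that column
is locally a multiple of `P` or of `Q`. On the diagonal the same recurrences leave
the discrete Wronskian `P (k + 1) * Q k - P k * Q (k + 1)`, which is the constant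
`sinh γ * sinh (γ h)`. This is the content of `tridiag_mul_singlePair`; a left inverse of a square
matrix is its inverse.
-/

/-- The `i`-th row of a tridiagonal matrix with diagonal `d` and off-diagonal entries `-1`, applied
to a vector `v`. -/
lemma sum_tridiag_row (n i : ℕ) (hi : i < n) (d : ℕ → ℝ) (v : ℕ → ℝ) :
    ∑ k ∈ Finset.range n,
      (if i = k then d i else if i + 1 = k ∨ k + 1 = i then -1 else 0) * v k =
    d i * v i - (if 0 < i then v (i - 1) else 0) - (if i + 1 < n then v (i + 1) else 0) := by
  have key : ∀ k ∈ Finset.range n,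
      (if i = k then d i else if i + 1 = k ∨ k + 1 = i then -1 else 0) * v k =
      (if i = k then d i * v k else 0) - (if i - 1 = k then (if 0 < i then v k else 0) else 0)
        - (if i + 1 = k then v k else 0) := by
    intro k _
    split_ifs <;> first | omega | ring
  rw [Finset.sum_congr rfl key, Finset.sum_sub_distrib, Finset.sum_sub_distrib,
    Finset.sum_ite_eq, Finset.sum_ite_eq, Finset.sum_ite_eq]
  have h1 : i - 1 < n := by omega
  simp [hi, h1]

/-- A tridiagonal matrix whose rows encode recurrences solved by `P` (including the left end) and
by `Q` (including the right end) inverts the single-pair matrix `P (min k j) * Q (max k j)` up to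
the constant discrete Wronskian `w`. The size is `m + 2`. -/
lemma tridiag_mul_singlePair (m : ℕ) (d P Q : ℕ → ℝ) (w : ℝ)
    (hP0 : d 0 * P 0 = P 1)
    (hP : ∀ k, k < m → d (k + 1) * P (k + 1) = P k + P (k + 2))
    (hQ : ∀ k, k < m → d (k + 1) * Q (k + 1) = Q k + Q (k + 2))
    (hQl : d (m + 1) * Q (m + 1) = Q m)
    (hw : ∀ k, P (k + 1) * Q k - P k * Q (k + 1) = w)
    (i j : ℕ) (hi : i < m + 2) (hj : j < m + 2) :
    ∑ k ∈ Finset.range (m + 2),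
      (if i = k then d i else if i + 1 = k ∨ k + 1 = i then -1 else 0) *
        (P (min k j) * Q (max k j)) = if i = j then w else 0 := by
  rw [sum_tridiag_row (m + 2) i hi d (fun k => P (min k j) * Q (max k j))]
  rcases lt_trichotomy i j with h | rfl | h
  · rw [if_pos (by omega : i + 1 < m + 2), if_neg h.ne, min_eq_left h.le, max_eq_right h.le,
      min_eq_left (by omega : i + 1 ≤ j), max_eq_right (by omega : i + 1 ≤ j)]
    rcases i with _ | k
    · simp only [lt_irrefl, if_false, zero_add]
      linear_combination Q j * hP0
    · rw [if_pos k.succ_pos, Nat.add_sub_cancel, min_eq_left (by omega : k ≤ j),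
        max_eq_right (by omega : k ≤ j)]
      linear_combination Q j * hP k (by omega)
  · simp only [min_self, max_self, if_true]
    rw [min_eq_left (by omega : i - 1 ≤ i), max_eq_right (by omega : i - 1 ≤ i),
      min_eq_right (by omega : i ≤ i + 1), max_eq_left (by omega : i ≤ i + 1)]
    rcases i with _ | k
    · simp only [lt_irrefl, if_false, zero_add]
      rw [if_pos (by omega)]
      linear_combination Q 0 * hP0 + hw 0
    · rw [if_pos k.succ_pos, Nat.add_sub_cancel]
      by_cases hk : k < m
      · rw [if_pos (by omega)]
        linear_combination Q (k + 1) * hP k hk + hw (k + 1)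
      · obtain rfl : k = m := by omega
        rw [if_neg (by omega)]
        linear_combination P (k + 1) * hQl + hw k
  · rw [if_neg h.ne', min_eq_right h.le, max_eq_left h.le,
      min_eq_right (by omega : j ≤ i + 1), max_eq_left (by omega : j ≤ i + 1),
      min_eq_right (by omega : j ≤ i - 1), max_eq_left (by omega : j ≤ i - 1)]
    rcases i with _ | k
    · omega
    · rw [if_pos k.succ_pos, Nat.add_sub_cancel]
      by_cases hk : k < m
      · rw [if_pos (by omega)]
        linear_combination P j * hQ k hk
      · obtain rfl : k = m := by omega
        rw [if_neg (by omega)]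
        linear_combination P j * hQl

lemma cosh_three_term (a b : ℝ) :
    2 * Real.cosh b * Real.cosh a = Real.cosh (a - b) + Real.cosh (a + b) := by
  rw [Real.cosh_sub, Real.cosh_add]; ring

lemma cosh_wronskian (c x t : ℝ) :
    Real.cosh (x + t) * Real.cosh (c - x) - Real.cosh x * Real.cosh (c - (x + t)) =
      Real.sinh c * Real.sinh t := by
  -- With `c = x + y`, both sides are polynomial in `cosh` and `sinh` of `x`, `y`, `t`.
  obtain ⟨y, rfl⟩ : ∃ y, c = x + y := ⟨c - x, by ring⟩
  rw [show x + y - x = y by ring, show x + y - (x + t) = y - t by ring,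
    Real.cosh_add, Real.cosh_sub, Real.sinh_add]
  ring


/-- Neumann Green's-function covariance with `ν = γ² > 0`:
`g (x, y) = η² cosh (γ min (x, y)) cosh (γ (1 - max (x, y)))` at equally spaced points
`x_i = x₁ + (i - 1) h ∈ (0, 1)`.  Then `G` is invertible and `G⁻¹ = η⁻² a T` with
`a = 1 / (sinh γ · sinh (γ h))` and `T` the explicit tridiagonal matrix.
(Matrix index `i : Fin n` ↔ paper index `i + 1`, so `x_i = x₁ + i h` for `i : Fin n`.) -/
theorem stmt19 (n : ℕ) (hn : 3 ≤ n) (γ η h x₁ : ℝ)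
    (hγ : 0 < γ) (hη : 0 < η) (hh : 0 < h)
    (hx₁ : 0 < x₁) (hxn : x₁ + (n - 1 : ℝ) * h < 1)
    (G : Matrix (Fin n) (Fin n) ℝ)
    (hG : ∀ i j : Fin n, G i j =
      η ^ 2 * Real.cosh (γ * min (x₁ + i.1 * h) (x₁ + j.1 * h)) *
        Real.cosh (γ * (1 - max (x₁ + i.1 * h) (x₁ + j.1 * h)))) :
    IsUnit G.det ∧ ∀ i j : Fin n,
      G⁻¹ i j = (η ^ 2)⁻¹ * (1 / (Real.sinh γ * Real.sinh (γ * h))) *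
        (if i = j then
          (if i.1 = 0 then Real.cosh (γ * (x₁ + h)) / Real.cosh (γ * x₁)
           else if i.1 = n - 1 then
             Real.cosh (γ * (1 - (x₁ + (n - 1 : ℝ) * h) + h)) /
               Real.cosh (γ * (1 - (x₁ + (n - 1 : ℝ) * h)))
           else 2 * Real.cosh (γ * h))
         else if i.1 + 1 = j.1 ∨ j.1 + 1 = i.1 then -1
         else 0) := by
  obtain ⟨m, rfl⟩ : ∃ m, n = m + 2 := ⟨n - 2, by omega⟩
  have hm : (((m + 2 : ℕ) : ℝ) - 1) = (m : ℝ) + 1 := by push_cast; ring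
  rw [hm]
  set P : ℕ → ℝ := fun k => Real.cosh (γ * (x₁ + k * h)) with hPd
  set Q : ℕ → ℝ := fun k => Real.cosh (γ * (1 - (x₁ + k * h))) with hQd
  set d : ℕ → ℝ := fun i =>
    if i = 0 then Real.cosh (γ * (x₁ + h)) / Real.cosh (γ * x₁)
    else if i = m + 2 - 1 then
      Real.cosh (γ * (1 - (x₁ + ((m : ℝ) + 1) * h) + h)) /
        Real.cosh (γ * (1 - (x₁ + ((m : ℝ) + 1) * h)))
    else 2 * Real.cosh (γ * h) with hd
  have hs : Real.sinh γ * Real.sinh (γ * h) ≠ 0 :=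
    mul_ne_zero (Real.sinh_pos_iff.2 hγ).ne' (Real.sinh_pos_iff.2 (mul_pos hγ hh)).ne'
  have hmid : ∀ k, k < m → d (k + 1) = 2 * Real.cosh (γ * h) := by
    intro k hk
    simp only [hd]
    rw [if_neg (by omega), if_neg (by omega)]
  have hrow := tridiag_mul_singlePair m d P Q (Real.sinh γ * Real.sinh (γ * h))
    (by
      simp only [hd, hPd, if_true, Nat.cast_zero, Nat.cast_one, zero_mul, add_zero, one_mul]
      exact div_mul_cancel₀ _ (Real.cosh_pos _).ne')
    (by
      intro k hk
      rw [hmid k hk]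
      simp only [hPd]
      rw [cosh_three_term]
      push_cast
      congr 2 <;> ring)
    (by
      intro k hk
      rw [hmid k hk]
      simp only [hQd]
      rw [cosh_three_term, add_comm]
      push_cast
      congr 2 <;> ring)
    (by
      simp only [hd, hQd]
      rw [if_neg (by omega), if_pos (by omega)]
      push_cast
      rw [div_mul_cancel₀ _ (Real.cosh_pos _).ne']
      congr 1; ring)
    (by
      intro k
      simp only [hPd, hQd]
      rw [← cosh_wronskian γ (γ * (x₁ + k * h)) (γ * h)]
      push_cast
      congr 3 <;> ring_nf)
  have hG' : ∀ i j : Fin (m + 2), G i j = η ^ 2 * (P (min i.1 j.1) * Q (max i.1 j.1)) := by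
    intro i j
    have hmono : Monotone fun k : ℕ => x₁ + (k : ℝ) * h := by
      intro a b hab
      have : (a : ℝ) ≤ b := by exact_mod_cast hab
      dsimp only
      gcongr
    rw [hG, ← hmono.map_min (a := i.1) (b := j.1), ← hmono.map_max (a := i.1) (b := j.1), mul_assoc]
  set M : Matrix (Fin (m + 2)) (Fin (m + 2)) ℝ := fun i j =>
    (η ^ 2)⁻¹ * (1 / (Real.sinh γ * Real.sinh (γ * h))) *
      (if i = j then d i.1 else if i.1 + 1 = j.1 ∨ j.1 + 1 = i.1 then -1 else 0) with hM
  have hMG : M * G = 1 := by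
    ext i j
    have hterm : ∀ k : Fin (m + 2), M i k * G k j =
        (1 / (Real.sinh γ * Real.sinh (γ * h))) *
          ((if i.1 = k.1 then d i.1 else if i.1 + 1 = k.1 ∨ k.1 + 1 = i.1 then -1 else 0) *
            (P (min k.1 j.1) * Q (max k.1 j.1))) := by
      intro k
      rw [hG']
      simp only [hM, Fin.ext_iff]
      field_simp
    rw [Matrix.mul_apply, Finset.sum_congr rfl fun k _ => hterm k, ← Finset.mul_sum,
      Fin.sum_univ_eq_sum_range (fun k : ℕ =>
        (if i.1 = k then d i.1 else if i.1 + 1 = k ∨ k + 1 = i.1 then -1 else 0) *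
          (P (min k j.1) * Q (max k j.1))) (m + 2), hrow i.1 j.1 i.2 j.2, Matrix.one_apply]
    simp only [Fin.ext_iff]
    split_ifs
    · exact one_div_mul_cancel hs
    · exact mul_zero _
  refine ⟨Matrix.isUnit_det_of_left_inverse hMG, fun i j => ?_⟩
  rw [Matrix.inv_eq_left_inv hMG]
end
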